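/- Third-order composite hypothesis testing asymptotics, achievability: Let P and Q₁,…,Q_k be probability distributions on a countable alphabet 𝒳 with Q_j(x) > 0 whenever P(x) > 0. Set D_j := E_{X∼P}[ log(P(X)/Q_j(X)) ], and assume V_j := Var_{X∼P}[ log(P(X)/Q_j(X)) ] > 0 and T_j := E_{X∼P}[ |log(P(X)/Q_j(X)) − D_j|³ ] < ∞ for every j. Let 𝖵 be the k×k covariance matrix of the vector ( log(P(X)/Q_j(X)) )_{j=1}^k under X ∼ P. Fix α ∈ (0,1) and put ε := 1−α. Then there exist a constant c ∈ ℝ and n₀ ∈ ℕ such that for all n ≥ n₀ and every z ∈ Q_inv(𝖵,ε), the vector ( exp( −n·D_j + √n·z_j − (1/2)·log n + c ) )_{j=1}^k belongs to β_α(P^{⊗n}, {Q_j^{⊗n}}_{j=1}^k). -/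

import Mathlib

/-!
Let `X = (D_j - ℓ_j)_j` with `ℓ_j = log (P / Q_j)`. Under `P` it is centred with covariance `A Aᵀ`
and has a finite absolute third moment, and on the support of `P` the product of the `Q_j` has
density `exp (-n D_j + S_j)` with respect to the product of `P`, where `S` is the sum of `n`
independent copies of `X` (`prod_eq_tilt`). The test accepts `P` when `S ≤ √n z + C` in every
coordinate. Two facts show that it works (`orthant_test`).

* Its power is at least `α`. The law of `S` is within `O(1 / √n)` of the Gaussian law on orthants
  (`Mom.berry_esseen`), and the Gaussian measure of `{y ≤ z + s}` is at least `α + c s` whenever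
  that of `{y ≤ z}` is at least `α` (`growth`). With `s = C / √n` and `C` large, the gain exceeds the
  Berry–Esseen error.
* Its error under `Q_j` is `O(exp (-n D_j + √n z_j) / √n)`. By the same Berry–Esseen bound every unit
  interval has mass `O(1 / √n)` under the law of `S_j` (`Mom.interval`), and on the test region the
  sum of `exp S_j` over unit slices is geometric (`lintegral_exp_le`).

The Berry–Esseen bound must hold for singular covariances. Two laws with equal first and second
moments, both carried by the range of `A`, differ by `O(j^(-3/2))` in total variation after
convolution with the Gaussian of covariance `j A Aᵀ` (`tv_conv`): pulled back by a generalized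
inverse of `A`, this is a Taylor expansion of the Cameron–Martin density. Replacing the summands of
`S` by Gaussian ones, one at a time, the exchange in step `m` is smoothed by the Gaussian summands
already inserted, and the distance of the partial sum of length `m` from its Gaussian counterpart
enters only as a factor. An additional smoothing by `K` Gaussian summands, removed at the end by
`smoothing`, makes the resulting recursion contractive, so the bound `B / √(n + 1)` reproduces itself
(`eta_bound`, `berry_esseen`). Singularity is harmless in `smoothing` too, since strips around
orthants involve only the one-dimensional marginals, whose variances are positive (`nu_strip`).

For `growth`, let `x` and `y` be independent Gaussian points, the first inside the orthant and the
second outside the enlarged one. The path `cos θ • x + sin θ • y` crosses the strip between the two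
orthants at bounded speed, and at each `θ` it has the Gaussian law. Fubini then bounds the measure of
the strip from below by a multiple of its width, also for singular covariances.
-/

/-- `P[Z ≤ z]` for the centered Gaussian vector `Z = A·W` in `ℝ^d`, where `W` is a vector of
`d` independent standard Gaussians (so `Z` has covariance `A·Aᵀ`). -/
noncomputable def stdGaussianCdf {d : ℕ} (A : Matrix (Fin d) (Fin d) ℝ) (z : Fin d → ℝ) : ℝ :=
  ((MeasureTheory.Measure.map (fun w => A.mulVec w)
      (MeasureTheory.Measure.pi fun _ : Fin d => ProbabilityTheory.gaussianReal 0 1))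
    {y | ∀ i, y i ≤ z i}).toReal

section

open MeasureTheory ProbabilityTheory Filter
open scoped ENNReal NNReal BigOperators

/-! ### Gaussian measures and the Cameron–Martin formula -/

/-- The centred Gaussian measure on `ℝ^k` with covariance `v • 1`. -/
noncomputable def gv (k : ℕ) (v : ℝ≥0) : Measure (Fin k → ℝ) :=
  Measure.pi fun _ => gaussianReal 0 v

instance gv_prob (k : ℕ) (v : ℝ≥0) : IsProbabilityMeasure (gv k v) := by
  unfold gv; infer_instance

/-- Measure preserving maps of pairs act coordinatewise on product measures. -/
lemma pi_combine {k : ℕ} {μ ν ρ : Measure ℝ} [IsProbabilityMeasure μ] [IsProbabilityMeasure ν]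
    [IsProbabilityMeasure ρ] (g : Fin k → ℝ × ℝ → ℝ)
    (hg : ∀ i, MeasurePreserving (g i) (μ.prod ν) ρ) :
    MeasurePreserving (fun p : (Fin k → ℝ) × (Fin k → ℝ) => fun i => g i (p.1 i, p.2 i))
      ((Measure.pi fun _ => μ).prod (Measure.pi fun _ => ν)) (Measure.pi fun _ => ρ) := by
  have h1 := (measurePreserving_arrowProdEquivProdArrow ℝ ℝ (Fin k)
    (fun _ => μ) (fun _ => ν)).symm
  have h2 := measurePreserving_pi (fun _ : Fin k => μ.prod ν) (fun _ : Fin k => ρ) hg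
  exact h2.comp h1

lemma gv_conv (k : ℕ) (a b : ℝ≥0) : gv k a ∗ gv k b = gv k (a + b) := by
  have h : MeasurePreserving (fun p : ℝ × ℝ => p.1 + p.2)
      ((gaussianReal 0 a).prod (gaussianReal 0 b)) (gaussianReal 0 (a + b)) := by
    refine ⟨by fun_prop, ?_⟩
    have := gaussianReal_conv_gaussianReal (m₁ := 0) (m₂ := 0) (v₁ := a) (v₂ := b)
    simpa [Measure.conv] using this
  exact (pi_combine (k := k) (fun _ p => p.1 + p.2) (fun _ => h)).map_eq

lemma gv_scale (k : ℕ) (a : ℝ≥0) :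
    (gv k 1).map (fun w => fun i => Real.sqrt a * w i) = gv k a := by
  refine (measurePreserving_pi (fun _ : Fin k => gaussianReal 0 1)
    (fun _ : Fin k => gaussianReal 0 a) (f := fun _ x => Real.sqrt a * x) fun i => ?_).map_eq
  refine ⟨by fun_prop, ?_⟩
  rw [gaussianReal_map_const_mul]
  congr 1
  · simp
  · ext; simp [Real.sq_sqrt]

/-- The one-dimensional Cameron–Martin formula, integrated over a set. -/
lemma gauss_shift_real (s : Set ℝ) (hs : MeasurableSet s) (v : ℝ) :
    ∫ w, s.indicator (fun w => Real.exp (v * w - v ^ 2 / 2)) w ∂gaussianReal 0 1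
      = (gaussianReal v 1).real s := by
  rw [integral_gaussianReal_eq_integral_smul (by simp), Measure.real,
    gaussianReal_apply_eq_integral _ (by simp), ENNReal.toReal_ofReal
      (integral_nonneg fun x => gaussianPDFReal_nonneg _ _ _), ← integral_indicator hs]
  congr 1
  ext w
  by_cases hw : w ∈ s
  · simp only [Set.indicator_of_mem hw, smul_eq_mul, gaussianPDFReal]
    rw [mul_assoc, ← Real.exp_add]
    congr 2
    simp; ring
  · simp [hw]

/-- Density of the standard Gaussian measure translated by `v`, with respect to the standard
Gaussian measure. -/
noncomputable def shiftDens {k : ℕ} (v w : Fin k → ℝ) : ℝ :=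
  Real.exp (∑ i, v i * w i - (∑ i, v i ^ 2) / 2)

lemma shiftDens_eq_prod {k : ℕ} (v w : Fin k → ℝ) :
    shiftDens v w = ∏ i, Real.exp (v i * w i - v i ^ 2 / 2) := by
  rw [shiftDens, ← Real.exp_sum, Finset.sum_sub_distrib, Finset.sum_div]

lemma shiftDens_pos {k : ℕ} (v w : Fin k → ℝ) : 0 < shiftDens v w := Real.exp_pos _

lemma measurable_shiftDens {k : ℕ} (v : Fin k → ℝ) : Measurable (shiftDens v) := by
  unfold shiftDens; fun_prop

lemma integrable_shiftDens {k : ℕ} (v : Fin k → ℝ) : Integrable (shiftDens v) (gv k 1) := by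
  have : shiftDens v = fun w => ∏ i, Real.exp (v i * w i - v i ^ 2 / 2) := by
    ext w; exact shiftDens_eq_prod v w
  rw [this]
  refine Integrable.fintype_prod (f := fun i x => Real.exp (v i * x - v i ^ 2 / 2)) fun i => ?_
  simp only [Real.exp_sub]
  exact (integrable_exp_mul_gaussianReal (v i)).div_const _

/-- Cameron–Martin formula for the standard Gaussian measure on `ℝ^k`. -/
lemma gv_shift {k : ℕ} (v : Fin k → ℝ) :
    (gv k 1).map (fun w => v + w)
      = (gv k 1).withDensity (fun w => ENNReal.ofReal (shiftDens v w)) := by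
  have h1 : (gv k 1).map (fun w => v + w) = Measure.pi fun i => gaussianReal (v i) 1 := by
    refine (measurePreserving_pi (fun _ : Fin k => gaussianReal 0 1)
      (fun i : Fin k => gaussianReal (v i) 1) (f := fun i x => v i + x) fun i => ?_).map_eq
    refine ⟨by fun_prop, ?_⟩
    rw [gaussianReal_map_const_add]; simp
  rw [h1]
  refine Measure.pi_eq fun s hs => ?_
  rw [withDensity_apply _ (MeasurableSet.univ_pi hs),
    ← ofReal_integral_eq_lintegral_ofReal (integrable_shiftDens v).integrableOn
      (ae_of_all _ fun w => (shiftDens_pos v w).le),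
    ← integral_indicator (MeasurableSet.univ_pi hs)]
  have h2 : (Set.univ.pi s).indicator (fun w => shiftDens v w)
      = fun w => ∏ i, (s i).indicator (fun x => Real.exp (v i * x - v i ^ 2 / 2)) (w i) := by
    ext w
    by_cases hw : w ∈ Set.univ.pi s
    · rw [Set.indicator_of_mem hw, shiftDens_eq_prod]
      refine Finset.prod_congr rfl fun i _ => ?_
      rw [Set.indicator_of_mem (hw i trivial)]
    · rw [Set.indicator_of_notMem hw]
      simp only [Set.mem_pi, not_forall] at hw
      obtain ⟨i, _, hi⟩ := hw
      exact (Finset.prod_eq_zero (Finset.mem_univ i) (by simp [hi])).symm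
  rw [h2, gv, integral_fintype_prod_eq_prod
    (f := fun i => (s i).indicator (fun x => Real.exp (v i * x - v i ^ 2 / 2)))]
  simp_rw [gauss_shift_real _ (hs _)]
  rw [ENNReal.ofReal_prod_of_nonneg fun i _ => measureReal_nonneg]
  refine Finset.prod_congr rfl fun i _ => ?_
  simp

lemma integral_gv_shift {k : ℕ} (v : Fin k → ℝ) (h : (Fin k → ℝ) → ℝ) (hh : Measurable h) :
    ∫ w, h (v + w) ∂gv k 1 = ∫ w, shiftDens v w * h w ∂gv k 1 := by
  have : ∫ w, h (v + w) ∂gv k 1 = ∫ w, h w ∂((gv k 1).map (fun w => v + w)) := by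
    rw [integral_map (by fun_prop) hh.aestronglyMeasurable]
  rw [this, gv_shift, integral_withDensity_eq_integral_toReal_smul
    (measurable_shiftDens v).ennreal_ofReal (by simp)]
  simp [ENNReal.toReal_ofReal (shiftDens_pos v _).le]

/-! ### Taylor expansion of shifted Gaussian averages -/

/-- Remainder of the second-order Taylor expansion of `shiftDens v w` in `v`. -/
noncomputable def shiftRem {k : ℕ} (v w : Fin k → ℝ) : ℝ :=
  shiftDens v w - (1 + ∑ i, v i * w i + ((∑ i, v i * w i) ^ 2 - ∑ i, v i ^ 2) / 2)

/-- A majorant of the Taylor remainder, integrable for the standard Gaussian measure. It is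
exponential in `∑ |w i|`, hence also dominates all polynomials of degree at most two; the constants
are not optimized. -/
noncomputable def gMaj {k : ℕ} (w : Fin k → ℝ) : ℝ := 12 * Real.exp (2 * (∑ i, |w i| + k + 1))

lemma exp_taylor_two (y : ℝ) :
    |Real.exp y - (1 + y + y ^ 2 / 2)| ≤ |y| ^ 3 * Real.exp |y| := by
  have h := Complex.norm_exp_sub_sum_le_norm_mul_exp (y : ℂ) 3
  have e : Complex.exp (y : ℂ) - ∑ m ∈ Finset.range 3, (y : ℂ) ^ m / (m.factorial : ℂ)
      = ((Real.exp y - (1 + y + y ^ 2 / 2) : ℝ) : ℂ) := by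
    simp [Finset.sum_range_succ, Nat.factorial]
  rw [e, Complex.norm_real, Complex.norm_real] at h
  simpa using h

lemma abs_dot_le {k : ℕ} (v w : Fin k → ℝ) : |∑ i, v i * w i| ≤ ‖v‖ * ∑ i, |w i| := by
  rw [Finset.mul_sum]
  refine (Finset.abs_sum_le_sum_abs _ _).trans (Finset.sum_le_sum fun i _ => ?_)
  rw [abs_mul]
  exact mul_le_mul_of_nonneg_right (norm_le_pi_norm v i) (abs_nonneg _)

lemma sum_sq_le {k : ℕ} (v : Fin k → ℝ) : ∑ i, v i ^ 2 ≤ k * ‖v‖ ^ 2 := by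
  have : ∀ i ∈ Finset.univ, v i ^ 2 ≤ ‖v‖ ^ 2 := fun i _ => by
    rw [← sq_abs]; exact pow_le_pow_left₀ (abs_nonneg _) (norm_le_pi_norm v i) 2
  simpa using Finset.sum_le_sum this

lemma cube_le_exp {x : ℝ} (hx : 0 ≤ x) : x ^ 3 ≤ 6 * Real.exp x := by
  have := Real.pow_div_factorial_le_exp x hx 3
  simp [Nat.factorial] at this
  linarith

/-- The scalar form of the remainder bound for shifts `v` of norm at most one, with `s = ‖v‖`,
`a = ∑ v i * w i`, `b = ∑ v i ^ 2`, `N = ∑ |w i|` and `κ` the dimension. -/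
lemma rem_small {s N κ a b G : ℝ} (hs0 : 0 ≤ s) (hv : s ≤ 1) (hN0 : 0 ≤ N) (hk0 : 0 ≤ κ)
    (ha1 : |a| ≤ s * N) (hb0 : 0 ≤ b) (hb1 : b ≤ κ * s ^ 2)
    (hG : 2 * (N + κ + 1) ^ 3 * Real.exp (N + κ) ≤ G) :
    |Real.exp (a - b / 2) - (1 + a + (a ^ 2 - b) / 2)| ≤ s ^ 3 * G := by
  have hNk : 0 ≤ N + κ := add_nonneg hN0 hk0
  have he1 : 1 ≤ Real.exp (N + κ) := Real.one_le_exp hNk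
  have hy1 : |a - b / 2| ≤ s * (N + κ) := by
    have h1 : |a - b / 2| ≤ |a| + |b / 2| := abs_sub _ _
    rw [abs_of_nonneg (by linarith : 0 ≤ b / 2)] at h1
    have hvv : s ^ 2 ≤ s := by nlinarith
    have h2 : κ * s ^ 2 ≤ κ * s := mul_le_mul_of_nonneg_left hvv hk0
    linarith
  have hy2 : |a - b / 2| ≤ N + κ := hy1.trans (mul_le_of_le_one_left hNk hv)
  have hT := exp_taylor_two (a - b / 2)
  have hT2 : |a - b / 2| ^ 3 * Real.exp |a - b / 2| ≤ (s * (N + κ)) ^ 3 * Real.exp (N + κ) :=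
    mul_le_mul (pow_le_pow_left₀ (abs_nonneg _) hy1 3) (Real.exp_le_exp.2 hy2)
      (Real.exp_pos _).le (by positivity)
  have hR : Real.exp (a - b / 2) - (1 + a + (a ^ 2 - b) / 2)
      = (Real.exp (a - b / 2) - (1 + (a - b / 2) + (a - b / 2) ^ 2 / 2))
        + (b ^ 2 / 8 - a * b / 2) := by ring
  have hab : |b ^ 2 / 8 - a * b / 2| ≤ s ^ 3 * (κ ^ 2 + N * κ) := by
    have h1 : |b ^ 2 / 8 - a * b / 2| ≤ |b ^ 2 / 8| + |a * b / 2| := abs_sub _ _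
    rw [abs_of_nonneg (by positivity : 0 ≤ b ^ 2 / 8), abs_div, abs_mul,
      abs_of_nonneg hb0, abs_two] at h1
    have h2 : |a| * b ≤ (s * N) * (κ * s ^ 2) :=
      mul_le_mul ha1 hb1 hb0 (by positivity)
    have h3 : b ^ 2 ≤ (κ * s ^ 2) ^ 2 := pow_le_pow_left₀ hb0 hb1 2
    have h4 : (κ * s ^ 2) ^ 2 ≤ κ ^ 2 * s ^ 3 := by
      have : s ^ 4 ≤ s ^ 3 := pow_le_pow_of_le_one hs0 hv (by norm_num)
      calc (κ * s ^ 2) ^ 2 = κ ^ 2 * s ^ 4 := by ring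
        _ ≤ _ := mul_le_mul_of_nonneg_left this (by positivity)
    have h5 : 0 ≤ |a| * b := by positivity
    have h6 := sq_nonneg b
    have h7 : s ^ 3 * (κ ^ 2 + N * κ) = κ ^ 2 * s ^ 3 + (s * N) * (κ * s ^ 2) := by ring
    rw [h7]
    linarith
  rw [hR]
  refine (abs_add_le _ _).trans ?_
  have h7 : (N + κ) ^ 3 * Real.exp (N + κ) + (κ ^ 2 + N * κ) ≤ G := by
    refine le_trans ?_ hG
    have h8 : (N + κ) ^ 3 ≤ (N + κ + 1) ^ 3 := pow_le_pow_left₀ hNk (by linarith) 3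
    have h9 : κ ^ 2 + N * κ ≤ (N + κ + 1) ^ 3 := by
      have h : (1 : ℝ) ≤ N + κ + 1 := by linarith
      have h' : (N + κ + 1) ^ 2 ≤ (N + κ + 1) ^ 3 := pow_le_pow_right₀ h (by norm_num)
      nlinarith [mul_nonneg hN0 hk0, sq_nonneg N]
    have h10 : (0 : ℝ) ≤ (N + κ + 1) ^ 3 := by positivity
    have h11 := mul_le_mul_of_nonneg_right h8 (Real.exp_pos (N + κ)).le
    have h12 := mul_le_mul_of_nonneg_left he1 h10
    linarith
  have h11 := mul_le_mul_of_nonneg_left h7 (pow_nonneg hs0 3)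
  have h12 : (s * (N + κ)) ^ 3 * Real.exp (N + κ)
    = s ^ 3 * ((N + κ) ^ 3 * Real.exp (N + κ)) := by ring
  rw [mul_add] at h11
  linarith

/-- The scalar form of the remainder bound for shifts of norm at least one, with the symbols of
`rem_small`: here `s ^ 3` dominates every lower power of `s`, so each term can be estimated
separately. The density `d` has no bound uniform in the shift and is kept, since its integral
is one. -/
lemma rem_large {s N κ a b G d : ℝ} (hv : 1 ≤ s) (hN0 : 0 ≤ N) (hk0 : 0 ≤ κ)
    (ha1 : |a| ≤ s * N) (hb0 : 0 ≤ b) (hb1 : b ≤ κ * s ^ 2) (hd : 0 < d)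
    (hG : (N + κ + 1) ^ 3 ≤ G) :
    |d - (1 + a + (a ^ 2 - b) / 2)| ≤ s ^ 3 * d + s ^ 3 * G := by
  have hs0 : 0 ≤ s := by linarith
  have hv3 : 1 ≤ s ^ 3 := one_le_pow₀ hv
  have hv1 : s ≤ s ^ 3 := by simpa using pow_le_pow_right₀ hv (show 1 ≤ 3 by norm_num)
  have hv2 : s ^ 2 ≤ s ^ 3 := pow_le_pow_right₀ hv (by norm_num)
  have h1 : |d - (1 + a + (a ^ 2 - b) / 2)| ≤ d + (1 + |a| + (a ^ 2 + b) / 2) := by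
    refine (abs_sub _ _).trans ?_
    rw [abs_of_pos hd]
    have h2 : |1 + a + (a ^ 2 - b) / 2| ≤ |1 + a| + |(a ^ 2 - b) / 2| := abs_add_le _ _
    have h3 : |1 + a| ≤ 1 + |a| := by simpa using abs_add_le 1 a
    have h4 : |(a ^ 2 - b) / 2| ≤ (a ^ 2 + b) / 2 := by
      rw [abs_le]; constructor <;> linarith [sq_nonneg a]
    linarith
  have ha2 : a ^ 2 ≤ s ^ 3 * N ^ 2 := by
    rw [← sq_abs]
    calc |a| ^ 2 ≤ (s * N) ^ 2 := pow_le_pow_left₀ (abs_nonneg _) ha1 2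
      _ = s ^ 2 * N ^ 2 := by ring
      _ ≤ _ := mul_le_mul_of_nonneg_right hv2 (by positivity)
  have ha3 : |a| ≤ s ^ 3 * N := ha1.trans (mul_le_mul_of_nonneg_right hv1 hN0)
  have hb3 : b ≤ s ^ 3 * κ := by
    have := mul_le_mul_of_nonneg_left hv2 hk0
    linarith
  have h5 : 1 + |a| + (a ^ 2 + b) / 2 ≤ s ^ 3 * (1 + N + N ^ 2 + κ) := by
    have h51 : 0 ≤ s ^ 3 * N ^ 2 := by positivity
    have h52 : 0 ≤ s ^ 3 * κ := by positivity
    have h53 : s ^ 3 * (1 + N + N ^ 2 + κ) = s ^ 3 + s ^ 3 * N + s ^ 3 * N ^ 2 + s ^ 3 * κ := by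
      ring
    rw [h53]
    linarith
  have h6 : 1 + N + N ^ 2 + κ ≤ G := by
    refine le_trans ?_ hG
    have h : (1 : ℝ) ≤ N + κ + 1 := by linarith
    have h' : (N + κ + 1) ^ 2 ≤ (N + κ + 1) ^ 3 := pow_le_pow_right₀ h (by norm_num)
    nlinarith [mul_nonneg hN0 hk0, sq_nonneg κ]
  have h7 := mul_le_mul_of_nonneg_left h6 (pow_nonneg hs0 3)
  have h8 : d ≤ s ^ 3 * d := le_mul_of_one_le_left hd.le hv3
  linarith

lemma shiftRem_bound {k : ℕ} (v w : Fin k → ℝ) :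
    |shiftRem v w| ≤ ‖v‖ ^ 3 * shiftDens v w + ‖v‖ ^ 3 * gMaj w := by
  have hN0 : 0 ≤ ∑ i, |w i| := Finset.sum_nonneg fun i _ => abs_nonneg _
  have hs0 : 0 ≤ ‖v‖ := norm_nonneg v
  have hb0 : 0 ≤ ∑ i, v i ^ 2 := Finset.sum_nonneg fun i _ => sq_nonneg _
  have hk0 : (0 : ℝ) ≤ k := Nat.cast_nonneg k
  have hdens := shiftDens_pos v w
  have hG : 2 * (∑ i, |w i| + k + 1) ^ 3 * Real.exp (∑ i, |w i| + k) ≤ gMaj w := by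
    have h1 := cube_le_exp (x := ∑ i, |w i| + k + 1) (by positivity)
    have h2 : Real.exp (∑ i, |w i| + k) ≤ Real.exp (∑ i, |w i| + k + 1) :=
      Real.exp_le_exp.2 (by linarith)
    have h3 : gMaj w = 12 * (Real.exp (∑ i, |w i| + k + 1) * Real.exp (∑ i, |w i| + k + 1)) := by
      rw [← Real.exp_add, gMaj]; congr 2; ring
    rw [h3]
    have h4 := mul_le_mul h1 h2 (Real.exp_pos _).le (by positivity)
    linarith
  have hM3 : (∑ i, |w i| + k + 1) ^ 3 ≤ gMaj w := by
    have he1 : 1 ≤ Real.exp (∑ i, |w i| + k) := Real.one_le_exp (by positivity)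
    have h0 : (0 : ℝ) ≤ (∑ i, |w i| + k + 1) ^ 3 := by positivity
    have := mul_le_mul_of_nonneg_left he1 h0
    linarith
  rcases le_total ‖v‖ 1 with hv | hv
  · have := rem_small hs0 hv hN0 hk0 (abs_dot_le v w) hb0 (sum_sq_le v) hG
    have h0 : 0 ≤ ‖v‖ ^ 3 * shiftDens v w := by positivity
    unfold shiftRem
    rw [show shiftDens v w = Real.exp (∑ i, v i * w i - (∑ i, v i ^ 2) / 2) from rfl] at h0 ⊢
    linarith
  · exact rem_large hv hN0 hk0 (abs_dot_le v w) hb0 (sum_sq_le v) hdens hM3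

lemma integrable_exp_abs_gauss (c : ℝ) :
    Integrable (fun x => Real.exp (c * |x|)) (gaussianReal 0 1) := by
  refine Integrable.mono' ((integrable_exp_mul_gaussianReal (μ := 0) (v := 1) c).add
    (integrable_exp_mul_gaussianReal (μ := 0) (v := 1) (-c))) (by fun_prop) (ae_of_all _ fun x => ?_)
  simp only [Pi.add_apply, Real.norm_eq_abs, abs_of_pos (Real.exp_pos _)]
  rcases abs_cases x with ⟨h, _⟩ | ⟨h, _⟩ <;> rw [h]
  · linarith [Real.exp_pos (-c * x)]
  · rw [mul_neg, ← neg_mul]; linarith [Real.exp_pos (c * x)]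

lemma integrable_exp_sum_abs (k : ℕ) (c : ℝ) :
    Integrable (fun w : Fin k → ℝ => Real.exp (c * ∑ i, |w i|)) (gv k 1) := by
  have : (fun w : Fin k → ℝ => Real.exp (c * ∑ i, |w i|))
      = fun w => ∏ i, Real.exp (c * |w i|) := by
    ext w; rw [Finset.mul_sum, Real.exp_sum]
  rw [this]
  exact Integrable.fintype_prod (f := fun _ x => Real.exp (c * |x|))
    fun i => integrable_exp_abs_gauss c

lemma integrable_gMaj (k : ℕ) : Integrable (gMaj (k := k)) (gv k 1) := by
  have : (gMaj (k := k)) = fun w => (12 * Real.exp (2 * (k + 1))) *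
      Real.exp (2 * ∑ i, |w i|) := by
    ext w; rw [gMaj, mul_assoc, ← Real.exp_add]; congr 2; ring
  rw [this]
  exact (integrable_exp_sum_abs k 2).const_mul _

lemma gMaj_nonneg {k : ℕ} (w : Fin k → ℝ) : 0 ≤ gMaj w := by unfold gMaj; positivity

lemma integral_shiftDens {k : ℕ} (v : Fin k → ℝ) : ∫ w, shiftDens v w ∂gv k 1 = 1 := by
  have := integral_gv_shift v (fun _ => 1) measurable_const
  simpa using this.symm

/-- The constant in the cubic error of `shift_expansion`: the integral of
`shiftDens v + gMaj`, which does not depend on `v`. -/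
noncomputable def tvC (k : ℕ) : ℝ := 1 + ∫ w, gMaj w ∂gv k 1

lemma tvC_pos (k : ℕ) : 0 < tvC k := by
  have : 0 ≤ ∫ w, gMaj w ∂gv k 1 := integral_nonneg fun w => gMaj_nonneg w
  unfold tvC; linarith

/-- Every polynomial of degree at most two is dominated by `gMaj`. -/
lemma poly_le_gMaj {k : ℕ} (w : Fin k → ℝ) (i l : Fin k) : 1 ≤ gMaj w ∧ |w i| ≤ gMaj w ∧
    |w i * w l| ≤ gMaj w := by
  set N := ∑ i, |w i| with hN
  have hi : |w i| ≤ N := Finset.single_le_sum (f := fun i => |w i|) (fun _ _ => abs_nonneg _)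
    (Finset.mem_univ i)
  have hl : |w l| ≤ N := Finset.single_le_sum (f := fun i => |w i|) (fun _ _ => abs_nonneg _)
    (Finset.mem_univ l)
  have hN0 : 0 ≤ N := (abs_nonneg _).trans hi
  have h1 : (2 * (N + k + 1)) + 1 ≤ Real.exp (2 * (N + k + 1)) := Real.add_one_le_exp _
  have h2 := Real.quadratic_le_exp_of_nonneg (x := 2 * (N + k + 1)) (by positivity)
  have hk0 : (0 : ℝ) ≤ k := Nat.cast_nonneg k
  have hg : gMaj w = 12 * Real.exp (2 * (N + k + 1)) := rfl
  refine ⟨by rw [hg]; nlinarith, by rw [hg]; nlinarith, ?_⟩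
  rw [abs_mul, hg]
  have : |w i| * |w l| ≤ N * N := mul_le_mul hi hl (abs_nonneg _) hN0
  nlinarith [mul_nonneg hN0 hk0]

lemma integrable_coord_mul {k : ℕ} {h : (Fin k → ℝ) → ℝ} (hh : Measurable h) {M : ℝ}
    (hM : ∀ w, |h w| ≤ M) (i : Fin k) : Integrable (fun w => w i * h w) (gv k 1) := by
  refine Integrable.mono' ((integrable_gMaj k).mul_const M)
    (by fun_prop) (ae_of_all _ fun w => ?_)
  rw [norm_mul]
  exact mul_le_mul (poly_le_gMaj w i i).2.1 (hM w) (norm_nonneg _) (gMaj_nonneg w)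

lemma integrable_coord_mul₂ {k : ℕ} {h : (Fin k → ℝ) → ℝ} (hh : Measurable h) {M : ℝ}
    (hM : ∀ w, |h w| ≤ M) (i l : Fin k) : Integrable (fun w => w i * w l * h w) (gv k 1) := by
  refine Integrable.mono' ((integrable_gMaj k).mul_const M)
    (by fun_prop) (ae_of_all _ fun w => ?_)
  rw [norm_mul]
  exact mul_le_mul (poly_le_gMaj w i l).2.2 (hM w) (norm_nonneg _) (gMaj_nonneg w)

lemma integrable_bdd {k : ℕ} {ρ : Measure (Fin k → ℝ)} [IsProbabilityMeasure ρ]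
    {h : (Fin k → ℝ) → ℝ} (hh : Measurable h) {M : ℝ}
    (hM : ∀ w, |h w| ≤ M) : Integrable h ρ :=
  Integrable.mono' (integrable_const M) hh.aestronglyMeasurable (ae_of_all _ hM)

/-- The shifted Gaussian average of a bounded function is a quadratic polynomial in the shift
up to a cubic error. -/
lemma shift_expansion {k : ℕ} {h : (Fin k → ℝ) → ℝ} (hh : Measurable h) {M : ℝ}
    (hM : ∀ w, |h w| ≤ M) (v : Fin k → ℝ) :
    |(∫ w, h (v + w) ∂gv k 1) - ((∫ w, h w ∂gv k 1) + ∑ i, v i * (∫ w, w i * h w ∂gv k 1)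
      + ((∑ i, ∑ l, v i * v l * (∫ w, w i * w l * h w ∂gv k 1))
        - ∑ i, v i * v i * (∫ w, h w ∂gv k 1)) / 2)|
      ≤ M * (‖v‖ ^ 3 * tvC k) := by
  have hM0 : 0 ≤ M := (abs_nonneg _).trans (hM 0)
  have ih : Integrable h (gv k 1) := integrable_bdd hh hM
  have i1 : Integrable (fun w => ∑ i, v i * (w i * h w)) (gv k 1) :=
    integrable_finsetSum _ fun i _ => (integrable_coord_mul hh hM i).const_mul _
  have i2 : Integrable (fun w => ∑ i, ∑ l, v i * v l * (w i * w l * h w)) (gv k 1) :=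
    integrable_finsetSum _ fun i _ => integrable_finsetSum _ fun l _ =>
      (integrable_coord_mul₂ hh hM i l).const_mul _
  have i3 : Integrable (fun w => ∑ i, v i * v i * h w) (gv k 1) :=
    integrable_finsetSum _ fun i _ => ih.const_mul _
  have i4 : Integrable (fun w => shiftDens v w * h w) (gv k 1) :=
    (integrable_shiftDens v).mul_bdd (c := M) hh.aestronglyMeasurable (ae_of_all _ hM)
  have i5 : Integrable (fun w => h w + ∑ i, v i * (w i * h w)
      + ((∑ i, ∑ l, v i * v l * (w i * w l * h w)) - ∑ i, v i * v i * h w) / 2) (gv k 1) :=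
    (ih.add i1).add ((i2.sub i3).div_const 2)
  have a1 : ∫ w, (h w + ∑ i, v i * (w i * h w)
      + ((∑ i, ∑ l, v i * v l * (w i * w l * h w)) - ∑ i, v i * v i * h w) / 2) ∂gv k 1
      = (∫ w, (h w + ∑ i, v i * (w i * h w)) ∂gv k 1)
        + ∫ w, ((∑ i, ∑ l, v i * v l * (w i * w l * h w)) - ∑ i, v i * v i * h w) / 2 ∂gv k 1 :=
    integral_add (ih.add i1) ((i2.sub i3).div_const 2)
  have a2 : ∫ w, (h w + ∑ i, v i * (w i * h w)) ∂gv k 1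
      = (∫ w, h w ∂gv k 1) + ∫ w, (∑ i, v i * (w i * h w)) ∂gv k 1 := integral_add ih i1
  have a3 : ∫ w, ((∑ i, ∑ l, v i * v l * (w i * w l * h w)) - ∑ i, v i * v i * h w) ∂gv k 1
      = (∫ w, (∑ i, ∑ l, v i * v l * (w i * w l * h w)) ∂gv k 1)
        - ∫ w, (∑ i, v i * v i * h w) ∂gv k 1 := integral_sub i2 i3
  have e1 : ((∫ w, h w ∂gv k 1) + ∑ i, v i * (∫ w, w i * h w ∂gv k 1)
      + ((∑ i, ∑ l, v i * v l * (∫ w, w i * w l * h w ∂gv k 1))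
        - ∑ i, v i * v i * (∫ w, h w ∂gv k 1)) / 2)
      = ∫ w, (h w + ∑ i, v i * (w i * h w) + ((∑ i, ∑ l, v i * v l * (w i * w l * h w))
        - ∑ i, v i * v i * h w) / 2) ∂gv k 1 := by
    rw [a1, a2, integral_div, a3,
      integral_finsetSum _ fun i _ => (integrable_coord_mul hh hM i).const_mul _,
      integral_finsetSum _ fun i _ => ih.const_mul _,
      integral_finsetSum _ fun i _ => integrable_finsetSum _ fun l _ =>
      (integrable_coord_mul₂ hh hM i l).const_mul _]
    simp_rw [integral_finsetSum _ fun l _ => (integrable_coord_mul₂ hh hM _ l).const_mul _,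
      integral_const_mul]
  rw [e1, integral_gv_shift v h hh, ← integral_sub i4 i5]
  have e2 : ∀ w, shiftDens v w * h w - (h w + ∑ i, v i * (w i * h w)
      + ((∑ i, ∑ l, v i * v l * (w i * w l * h w)) - ∑ i, v i * v i * h w) / 2)
      = shiftRem v w * h w := by
    intro w
    rw [shiftRem, sq (∑ i, v i * w i), Finset.sum_mul_sum]
    simp only [sub_mul, add_mul, div_mul_eq_mul_div, Finset.sum_mul, one_mul, sq]
    simp only [mul_assoc, mul_left_comm]
  simp_rw [e2]
  calc |∫ w, shiftRem v w * h w ∂gv k 1|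
      ≤ ∫ w, M * (‖v‖ ^ 3 * shiftDens v w + ‖v‖ ^ 3 * gMaj w) ∂gv k 1 := by
        rw [← Real.norm_eq_abs]
        refine norm_integral_le_of_norm_le ((((integrable_shiftDens v).const_mul _).add
          ((integrable_gMaj k).const_mul _)).const_mul _) (ae_of_all _ fun w => ?_)
        rw [norm_mul, mul_comm]
        exact mul_le_mul (hM w) (shiftRem_bound v w) (norm_nonneg _) hM0
    _ = M * (‖v‖ ^ 3 * tvC k) := by
        rw [integral_const_mul, integral_add ((integrable_shiftDens v).const_mul _)
          ((integrable_gMaj k).const_mul _), integral_const_mul, integral_const_mul,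
          integral_shiftDens, tvC]
        ring

/-! ### Total variation after Gaussian smoothing -/

lemma integrable_of_cube {k : ℕ} {ρ : Measure (Fin k → ℝ)} [IsProbabilityMeasure ρ]
    (h3 : Integrable (fun x => ‖x‖ ^ 3) ρ) (i l : Fin k) :
    Integrable (fun x : Fin k → ℝ => x i) ρ ∧ Integrable (fun x : Fin k → ℝ => x i * x l) ρ := by
  have key : ∀ s : ℝ, 0 ≤ s → s ≤ 1 + s ^ 3 ∧ s * s ≤ 1 + s ^ 3 := by
    intro s hs
    constructor
    · nlinarith [mul_nonneg hs (sq_nonneg (s - 1)), sq_nonneg (s - 1)]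
    · nlinarith [mul_nonneg hs (sq_nonneg (s - 1)), sq_nonneg (s - 1)]
  have hb : Integrable (fun x : Fin k → ℝ => 1 + ‖x‖ ^ 3) ρ := (integrable_const 1).add h3
  constructor
  · refine hb.mono' (measurable_pi_apply i).aestronglyMeasurable (ae_of_all _ fun x => ?_)
    exact (norm_le_pi_norm x i).trans (key _ (norm_nonneg _)).1
  · refine hb.mono' (by fun_prop) (ae_of_all _ fun x => ?_)
    rw [norm_mul]
    exact (mul_le_mul (norm_le_pi_norm x i) (norm_le_pi_norm x l) (norm_nonneg _)
      (norm_nonneg _)).trans (key _ (norm_nonneg _)).2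

/-- A shift of the Gaussian of variance `j` is a shift of the standard Gaussian by `x / √j`. -/
lemma integral_gv_eq {k : ℕ} (j : ℝ≥0) (hj : 0 < j) {h : (Fin k → ℝ) → ℝ} (hh : Measurable h)
    (x : Fin k → ℝ) :
    ∫ w, h (x + w) ∂gv k j
      = ∫ w, (fun u => h (fun i => Real.sqrt j * u i)) ((fun i => (Real.sqrt j)⁻¹ * x i) + w)
          ∂gv k 1 := by
  have hs : Real.sqrt j ≠ 0 := (Real.sqrt_pos.2 (by exact_mod_cast hj)).ne'
  have hmeas : Measurable fun w : Fin k → ℝ => fun i => Real.sqrt j * w i :=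
    measurable_pi_lambda _ fun i => (measurable_pi_apply i).const_mul _
  have hm2 : Measurable fun w : Fin k → ℝ => h (x + w) := hh.comp (measurable_const_add x)
  rw [← gv_scale, integral_map hmeas.aemeasurable hm2.aestronglyMeasurable]
  congr 1
  ext w
  congr 1
  ext i
  simp only [Pi.add_apply]
  field_simp

/-- Two laws with the same first and second moments become close in total variation after
convolution with a Gaussian of large variance `j`: rescaled to unit variance, a summand `x` is a
shift by `x / √j`, and the expansion of `shift_expansion` is a quadratic polynomial in `x` whose
integrals against the two laws agree. -/
lemma tv_bound {k : ℕ} {ρ₁ ρ₂ : Measure (Fin k → ℝ)} [IsProbabilityMeasure ρ₁]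
    [IsProbabilityMeasure ρ₂] (h₁ : Integrable (fun x => ‖x‖ ^ 3) ρ₁)
    (h₂ : Integrable (fun x => ‖x‖ ^ 3) ρ₂)
    (hm : ∀ i, ∫ x, x i ∂ρ₁ = ∫ x, x i ∂ρ₂)
    (hc : ∀ i l, ∫ x, x i * x l ∂ρ₁ = ∫ x, x i * x l ∂ρ₂)
    (j : ℝ≥0) (hj : 0 < j) {h : (Fin k → ℝ) → ℝ} (hh : Measurable h) {M : ℝ}
    (hM : ∀ w, |h w| ≤ M) :
    |(∫ x, ∫ w, h (x + w) ∂gv k j ∂ρ₁) - ∫ x, ∫ w, h (x + w) ∂gv k j ∂ρ₂|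
      ≤ M * ((tvC k * ((∫ x, ‖x‖ ^ 3 ∂ρ₁) + ∫ x, ‖x‖ ^ 3 ∂ρ₂)) * (Real.sqrt j ^ 3)⁻¹) := by
  set σ := (Real.sqrt j)⁻¹ with hσ
  have hσ0 : 0 ≤ σ := by positivity
  set g : (Fin k → ℝ) → ℝ := fun u => h (fun i => Real.sqrt j * u i) with hg
  have hgm : Measurable g := by fun_prop
  have hgM : ∀ w, |g w| ≤ M := fun w => hM _
  set p0 := ∫ w, g w ∂gv k 1
  set p1 : Fin k → ℝ := fun i => ∫ w, w i * g w ∂gv k 1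
  set p2 : Fin k → Fin k → ℝ := fun i l => ∫ w, w i * w l * g w ∂gv k 1
  let poly : (Fin k → ℝ) → ℝ := fun x => p0 + ∑ i, (σ * p1 i) * x i
    + ((∑ i, ∑ l, (σ * σ * p2 i l) * (x i * x l)) - ∑ i, (σ * σ * p0) * (x i * x i)) / 2
  let I : (Fin k → ℝ) → ℝ := fun x => ∫ w, h (x + w) ∂gv k j
  have hI : ∀ x, |I x - poly x| ≤ M * (σ ^ 3 * tvC k) * ‖x‖ ^ 3 := by
    intro x
    have := shift_expansion hgm hgM (fun i => σ * x i)
    have hn : ‖fun i => σ * x i‖ = σ * ‖x‖ := by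
      have : (fun i => σ * x i) = σ • x := by ext; simp
      rw [this, norm_smul, Real.norm_of_nonneg hσ0]
    rw [hn] at this
    have e : poly x = (p0 + ∑ i, (σ * x i) * p1 i
      + ((∑ i, ∑ l, (σ * x i) * (σ * x l) * p2 i l)
        - ∑ i, (σ * x i) * (σ * x i) * p0) / 2) := by
      simp only [poly]
      congr 1
      · congr 1
        exact Finset.sum_congr rfl fun i _ => by ring
      · congr 2
        · exact Finset.sum_congr rfl fun i _ => Finset.sum_congr rfl fun l _ => by ring
        · exact Finset.sum_congr rfl fun i _ => by ring
    rw [e]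
    simp only [I]
    rw [integral_gv_eq j hj hh x]
    refine this.trans (le_of_eq ?_)
    ring
  have hIm : StronglyMeasurable I := by
    have : Measurable (Function.uncurry fun x w : Fin k → ℝ => h (x + w)) := by
      unfold Function.uncurry; fun_prop
    exact this.stronglyMeasurable.integral_prod_right
  have hIb : ∀ x, |I x| ≤ M := by
    intro x
    have := norm_integral_le_of_norm_le_const (μ := gv k j) (f := fun w => h (x + w))
      (ae_of_all _ fun w => hM (x + w))
    simpa using this
  have main : ∀ ρ : Measure (Fin k → ℝ), IsProbabilityMeasure ρ →
      Integrable (fun x => ‖x‖ ^ 3) ρ →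
      Integrable poly ρ ∧ |(∫ x, I x ∂ρ) - ∫ x, poly x ∂ρ|
        ≤ M * (σ ^ 3 * tvC k) * ∫ x, ‖x‖ ^ 3 ∂ρ ∧
      ∫ x, poly x ∂ρ = p0 + ∑ i, (σ * p1 i) * (∫ x, x i ∂ρ)
    + ((∑ i, ∑ l, (σ * σ * p2 i l) * (∫ x, x i * x l ∂ρ))
      - ∑ i, (σ * σ * p0) * (∫ x, x i * x i ∂ρ)) / 2 := by
    intro ρ _ h3
    have iI : Integrable I ρ := integrable_bdd hIm.measurable hIb
    have j1 : ∀ i ∈ Finset.univ, Integrable (fun x : Fin k → ℝ => (σ * p1 i) * x i) ρ :=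
      fun i _ => (integrable_of_cube h3 i i).1.const_mul _
    have j2 : ∀ i l, Integrable (fun x : Fin k → ℝ => (σ * σ * p2 i l) * (x i * x l)) ρ :=
      fun i l => (integrable_of_cube h3 i l).2.const_mul _
    have j3 : ∀ i ∈ Finset.univ, Integrable (fun x : Fin k → ℝ => (σ * σ * p0) * (x i * x i)) ρ :=
      fun i _ => (integrable_of_cube h3 i i).2.const_mul _
    have k1 : Integrable (fun x : Fin k → ℝ => ∑ i, (σ * p1 i) * x i) ρ := integrable_finsetSum _ j1
    have k2 : Integrable (fun x : Fin k → ℝ => ∑ i, ∑ l, (σ * σ * p2 i l) * (x i * x l)) ρ :=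
      integrable_finsetSum _ fun i _ => integrable_finsetSum _ fun l _ => j2 i l
    have k3 : Integrable (fun x : Fin k → ℝ => ∑ i, (σ * σ * p0) * (x i * x i)) ρ :=
      integrable_finsetSum _ j3
    have k4 : Integrable (fun x : Fin k → ℝ => p0 + ∑ i, (σ * p1 i) * x i) ρ :=
      (integrable_const p0).add k1
    have k5 : Integrable (fun x : Fin k → ℝ => ((∑ i, ∑ l, (σ * σ * p2 i l) * (x i * x l))
      - ∑ i, (σ * σ * p0) * (x i * x i)) / 2) ρ := (k2.sub k3).div_const 2
    have ip : Integrable poly ρ := k4.add k5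
    refine ⟨ip, ?_, ?_⟩
    · rw [← integral_sub iI ip, ← integral_const_mul]
      exact norm_integral_le_of_norm_le (h3.const_mul _) (ae_of_all _ fun x => by
        rw [Real.norm_eq_abs]; exact hI x)
    · have b1 : ∫ x, poly x ∂ρ = (∫ x, (p0 + ∑ i, (σ * p1 i) * x i) ∂ρ)
          + ∫ x, ((∑ i, ∑ l, (σ * σ * p2 i l) * (x i * x l))
          - ∑ i, (σ * σ * p0) * (x i * x i)) / 2 ∂ρ := integral_add k4 k5
      have b2 : ∫ x, (p0 + ∑ i, (σ * p1 i) * x i) ∂ρ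
          = (∫ _, p0 ∂ρ) + ∫ x, (∑ i, (σ * p1 i) * x i) ∂ρ := integral_add (integrable_const _) k1
      have b3 : ∫ x, ((∑ i, ∑ l, (σ * σ * p2 i l) * (x i * x l))
          - ∑ i, (σ * σ * p0) * (x i * x i)) ∂ρ
          = (∫ x, (∑ i, ∑ l, (σ * σ * p2 i l) * (x i * x l)) ∂ρ)
            - ∫ x, (∑ i, (σ * σ * p0) * (x i * x i)) ∂ρ := integral_sub k2 k3
      rw [b1, b2, integral_div, b3, integral_finsetSum _ j1, integral_finsetSum _ j3,
        integral_finsetSum _ fun i _ => integrable_finsetSum _ fun l _ => j2 i l]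
      simp_rw [integral_finsetSum _ fun l _ => j2 _ l, integral_const_mul]
      simp
  obtain ⟨_, a1, c1⟩ := main ρ₁ inferInstance h₁
  obtain ⟨_, a2, c2⟩ := main ρ₂ inferInstance h₂
  have hpoly : ∫ x, poly x ∂ρ₁ = ∫ x, poly x ∂ρ₂ := by
    rw [c1, c2]; simp_rw [hm, hc]
  rw [hpoly] at a1
  have e3 : (Real.sqrt j ^ 3)⁻¹ = σ ^ 3 := by rw [hσ, inv_pow]
  rw [e3]
  have := abs_sub_le (∫ x, I x ∂ρ₁) (∫ x, poly x ∂ρ₂) (∫ x, I x ∂ρ₂)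
  rw [abs_sub_comm (∫ x, poly x ∂ρ₂)] at this
  calc _ ≤ _ := this
    _ ≤ _ := add_le_add a1 a2
    _ = _ := by ring

/-- The Gaussian law on `ℝ^k` with covariance `n • L Lᵀ`. -/
noncomputable def nu {k : ℕ} (L : (Fin k → ℝ) →L[ℝ] (Fin k → ℝ)) (n : ℕ) :
    Measure (Fin k → ℝ) := (gv k n).map L

instance nu_prob {k : ℕ} (L : (Fin k → ℝ) →L[ℝ] (Fin k → ℝ)) (n : ℕ) :
    IsProbabilityMeasure (nu L n) :=
  Measure.isProbabilityMeasure_map (by fun_prop)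

lemma nu_conv {k : ℕ} (L : (Fin k → ℝ) →L[ℝ] (Fin k → ℝ)) (m n : ℕ) :
    nu L m ∗ nu L n = nu L (m + n) := by
  unfold nu
  rw [← Measure.map_conv_continuousLinearMap, gv_conv]
  push_cast; rfl

lemma nu_zero {k : ℕ} (L : (Fin k → ℝ) →L[ℝ] (Fin k → ℝ)) : nu L 0 = Measure.dirac 0 := by
  unfold nu gv
  simp only [Nat.cast_zero, gaussianReal_zero_var]
  have : (Measure.pi fun _ : Fin k => Measure.dirac (0 : ℝ)) = Measure.dirac 0 := by
    refine Measure.pi_eq fun s hs => ?_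
    rw [Measure.dirac_apply' _ (MeasurableSet.univ_pi hs)]
    simp only [Measure.dirac_apply' _ (hs _)]
    by_cases h : (0 : Fin k → ℝ) ∈ Set.univ.pi s
    · rw [Set.indicator_of_mem h]
      refine (Finset.prod_eq_one fun i _ => ?_).symm
      have := h i trivial
      simp_all
    · rw [Set.indicator_of_notMem h]
      simp only [Set.mem_pi, not_forall] at h
      obtain ⟨i, _, hi⟩ := h
      exact (Finset.prod_eq_zero (Finset.mem_univ i) (by simpa using hi)).symm
  rw [this, Measure.map_dirac' L.continuous.measurable]
  simp

/-- `tv_bound` for linear images. No inverse of `L` is needed, so `L` may be singular. -/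
lemma tv_conv {k : ℕ} (L : (Fin k → ℝ) →L[ℝ] (Fin k → ℝ))
    {ρ₁ ρ₂ : Measure (Fin k → ℝ)} [IsProbabilityMeasure ρ₁]
    [IsProbabilityMeasure ρ₂] (h₁ : Integrable (fun x => ‖x‖ ^ 3) ρ₁)
    (h₂ : Integrable (fun x => ‖x‖ ^ 3) ρ₂)
    (hm : ∀ i, ∫ x, x i ∂ρ₁ = ∫ x, x i ∂ρ₂)
    (hc : ∀ i l, ∫ x, x i * x l ∂ρ₁ = ∫ x, x i * x l ∂ρ₂)
    (j : ℕ) (hj : 0 < j) {h : (Fin k → ℝ) → ℝ} (hh : Measurable h) {M : ℝ}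
    (hM : ∀ w, |h w| ≤ M) :
    |(∫ x, h x ∂((ρ₁.map L) ∗ nu L j)) - ∫ x, h x ∂((ρ₂.map L) ∗ nu L j)|
      ≤ M * ((tvC k * ((∫ x, ‖x‖ ^ 3 ∂ρ₁) + ∫ x, ‖x‖ ^ 3 ∂ρ₂)) * (Real.sqrt j ^ 3)⁻¹) := by
  have e : ∀ ρ : Measure (Fin k → ℝ), IsProbabilityMeasure ρ →
      ∫ x, h x ∂((ρ.map L) ∗ nu L j) = ∫ x, ∫ w, h (L (x + w)) ∂gv k j ∂ρ := by
    intro ρ _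
    unfold nu
    rw [← Measure.map_conv_continuousLinearMap, integral_map (by fun_prop) hh.aestronglyMeasurable,
      integral_conv]
    exact integrable_bdd (hh.comp L.continuous.measurable) (fun w => hM _)
  rw [e _ inferInstance, e _ inferInstance]
  have := tv_bound h₁ h₂ hm hc j (by exact_mod_cast hj) (h := fun x => h (L x))
    (hh.comp L.continuous.measurable) (M := M) (fun w => hM _)
  simpa using this

/-! ### Convolution powers, distribution functions and a numerical sum -/

/-- The `n`-fold convolution power of `μ`. -/
noncomputable def mupow {k : ℕ} (μ : Measure (Fin k → ℝ)) : ℕ → Measure (Fin k → ℝ)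
  | 0 => Measure.dirac 0
  | n + 1 => mupow μ n ∗ μ

instance mupow_prob {k : ℕ} (μ : Measure (Fin k → ℝ)) [IsProbabilityMeasure μ] (n : ℕ) :
    IsProbabilityMeasure (mupow μ n) := by
  induction n with
  | zero => unfold mupow; infer_instance
  | succ n ih => unfold mupow; infer_instance

/-- Convolution of the weights `(m+1)^{-1/2}` and `(j+K)^{-3/2}`: the weight reproduces itself,
with a factor that is small when `K` is large. -/
lemma eta_bound : ∃ S : ℝ, 0 ≤ S ∧ ∀ K : ℕ, 1 ≤ K → ∀ n : ℕ,
    ∑ m ∈ Finset.range n, (Real.sqrt (m + 1))⁻¹ * (Real.sqrt ((n - 1 - m + K : ℕ) : ℝ) ^ 3)⁻¹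
      ≤ S * (K : ℝ) ^ (-1/4 : ℝ) * (Real.sqrt (n + 1))⁻¹ := by
  -- fourth roots make all the exponents integral
  let q : ℝ → ℝ := fun x => x ^ (-1/4 : ℝ)
  have qpos : ∀ x, 0 < x → 0 < q x := fun x hx => Real.rpow_pos_of_pos hx _
  have qle : ∀ x y, 0 < x → x ≤ y → q y ≤ q x := fun x y hx hxy =>
    Real.rpow_le_rpow_of_nonpos hx hxy (by norm_num)
  have q2 : ∀ x, 0 < x → (Real.sqrt x)⁻¹ = q x ^ 2 := by
    intro x hx
    simp only [q]
    rw [← Real.rpow_natCast, ← Real.rpow_mul hx.le, Real.sqrt_eq_rpow, ← Real.rpow_neg hx.le]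
    norm_num
  have hsq : ∀ x y : ℝ, 0 ≤ x → 0 ≤ y → Real.sqrt (x + y) ≤ Real.sqrt x + Real.sqrt y := by
    intro x y hx hy
    rw [Real.sqrt_le_left (by positivity), add_sq, Real.sq_sqrt hx, Real.sq_sqrt hy]
    have : 0 ≤ 2 * Real.sqrt x * Real.sqrt y := by positivity
    linarith
  have hsum : Summable fun i : ℕ => q (i + 1) ^ 5 := by
    have h1 : Summable fun i : ℕ => ((i : ℝ) ^ (-5/4 : ℝ)) :=
      Real.summable_nat_rpow.2 (by norm_num)
    refine ((summable_nat_add_iff 1).2 h1).congr fun i => ?_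
    simp only [q]
    rw [← Real.rpow_natCast, ← Real.rpow_mul (by positivity)]
    push_cast
    norm_num
  set S0 := ∑' i : ℕ, q (i + 1) ^ 5
  have hS0 : 0 ≤ S0 := tsum_nonneg fun i => by positivity
  refine ⟨3 * S0, by positivity, fun K hK n => ?_⟩
  have hK' : (1 : ℝ) ≤ K := by exact_mod_cast hK
  have hterm : ∀ m ∈ Finset.range n, Real.sqrt (n + 1) *
      ((Real.sqrt (m + 1))⁻¹ * (Real.sqrt ((n - 1 - m + K : ℕ) : ℝ) ^ 3)⁻¹)
      ≤ q K * (2 * q ((n - 1 - m : ℕ) + 1) ^ 5 + q (m + 1) ^ 5) := by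
    intro m hm
    have hm' := Finset.mem_range.1 hm
    obtain ⟨j, hj⟩ : ∃ j, n = m + j + 1 := ⟨n - 1 - m, by omega⟩
    have e : n - 1 - m = j := by omega
    rw [e]
    have hn : Real.sqrt (n + 1) ≤ Real.sqrt (m + 1) + Real.sqrt (j + 1) := by
      rw [hj]; push_cast
      refine le_trans (le_of_eq ?_) (hsq (m + 1) (j + 1) (by positivity) (by positivity))
      congr 1; ring
    have hjK : (0 : ℝ) < ((j + K : ℕ) : ℝ) := by push_cast; positivity
    have a1 : q ((j + K : ℕ) : ℝ) ≤ q K := qle _ _ (by positivity) (by push_cast; linarith [show (0:ℝ) ≤ j by positivity])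
    have a2 : q ((j + K : ℕ) : ℝ) ≤ q (j + 1) := qle _ _ (by positivity) (by push_cast; linarith)
    have b1 := q2 (m + 1) (by positivity)
    have b2 := q2 (j + 1) (by positivity)
    have b3 := q2 ((j + K : ℕ) : ℝ) hjK
    have p1 := qpos ((j + K : ℕ) : ℝ) hjK
    have p2 := qpos (m + 1) (by positivity)
    have p3 := qpos (j + 1) (by positivity)
    have s1 : Real.sqrt (m + 1) = (q (m + 1) ^ 2)⁻¹ := by rw [← b1, inv_inv]
    have s2 : Real.sqrt (j + 1) = (q (j + 1) ^ 2)⁻¹ := by rw [← b2, inv_inv]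
    -- with `u, v, w, κ` the values of `q` at `j + K, m + 1, j + 1, K`, the bound follows from
    -- `√(n + 1) ≤ v⁻² + w⁻²`, from `u ≤ w` and from one factor `u ≤ κ`
    rw [← inv_pow, b1, b3]
    generalize q ((j + K : ℕ) : ℝ) = u at *
    generalize q K = κ at *
    rw [s1, s2] at hn
    generalize q (m + 1) = v at *
    generalize q (j + 1) = w at *
    have hA : v ^ 2 * (v ^ 2)⁻¹ = 1 := mul_inv_cancel₀ (by positivity)
    have hB : u ^ 2 * (w ^ 2)⁻¹ ≤ 1 := by
      rw [← div_eq_mul_inv, div_le_one (by positivity)]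
      exact pow_le_pow_left₀ p1.le a2 2
    have young : w ^ 3 * v ^ 2 ≤ w ^ 5 + v ^ 5 := by
      rcases le_total w v with h | h
      · have : w ^ 3 * v ^ 2 ≤ v ^ 3 * v ^ 2 := by gcongr
        nlinarith [pow_pos p3 5]
      · have : w ^ 3 * v ^ 2 ≤ w ^ 3 * w ^ 2 := by gcongr
        nlinarith [pow_pos p2 5]
    have hκ : 0 ≤ κ := p1.le.trans a1
    calc Real.sqrt (n + 1) * (v ^ 2 * (u ^ 2) ^ 3)
        ≤ ((v ^ 2)⁻¹ + (w ^ 2)⁻¹) * (v ^ 2 * (u ^ 2) ^ 3) := by gcongr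
      _ = u * u ^ 5 * (v ^ 2 * (v ^ 2)⁻¹) + (u ^ 2 * (w ^ 2)⁻¹) * (u * u ^ 3 * v ^ 2) := by ring
      _ ≤ κ * w ^ 5 * 1 + 1 * (κ * w ^ 3 * v ^ 2) := by
          rw [hA]
          gcongr
      _ ≤ κ * (2 * w ^ 5 + v ^ 5) := by
          have := mul_le_mul_of_nonneg_left young (p1.le.trans a1)
          nlinarith
  have hs := Finset.sum_le_sum hterm
  rw [← Finset.mul_sum, ← Finset.mul_sum] at hs
  have r1 : ∑ m ∈ Finset.range n, q ((n - 1 - m : ℕ) + 1) ^ 5 ≤ S0 := by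
    rw [Finset.sum_range_reflect (fun i : ℕ => q (i + 1) ^ 5)]
    exact hsum.sum_le_tsum _ fun i _ => (pow_pos (qpos _ (by positivity)) 5).le
  have r2 : ∑ m ∈ Finset.range n, q ((m : ℝ) + 1) ^ 5 ≤ S0 :=
    hsum.sum_le_tsum _ fun i _ => (pow_pos (qpos _ (by positivity)) 5).le
  rw [Finset.sum_add_distrib, ← Finset.mul_sum] at hs
  have hq := qpos K (by positivity)
  rw [← div_eq_mul_inv, le_div_iff₀ (by positivity), mul_comm]
  refine hs.trans ?_
  have : q K * (2 * ∑ m ∈ Finset.range n, q ((n - 1 - m : ℕ) + 1) ^ 5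
      + ∑ m ∈ Finset.range n, q ((m : ℝ) + 1) ^ 5) ≤ q K * (2 * S0 + S0) := by gcongr
  refine this.trans (le_of_eq ?_)
  show q K * _ = 3 * S0 * q K
  ring

lemma conv_real {k : ℕ} (ρ σ : Measure (Fin k → ℝ)) [IsProbabilityMeasure ρ]
    [IsProbabilityMeasure σ] (z : Fin k → ℝ) :
    (ρ ∗ σ).real (Set.Iic z) = ∫ y, ρ.real (Set.Iic (z - y)) ∂σ := by
  have h1 : (ρ ∗ σ).real (Set.Iic z) = ∫ x, (Set.Iic z).indicator (fun _ => (1 : ℝ)) x ∂(σ ∗ ρ) := by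
    rw [Measure.conv_comm, integral_indicator_const _ measurableSet_Iic]; simp
  rw [h1, integral_conv (integrable_bdd (measurable_const.indicator measurableSet_Iic)
    (M := 1) (fun w => by by_cases h : w ∈ Set.Iic z <;> simp [h]))]
  congr 1
  ext y
  have : (fun w : Fin k → ℝ => (Set.Iic z).indicator (fun _ => (1 : ℝ)) (y + w))
      = (Set.Iic (z - y)).indicator (fun _ => 1) := by
    ext w
    have : y + w ∈ Set.Iic z ↔ w ∈ Set.Iic (z - y) := by
      rw [Set.mem_Iic, Set.mem_Iic, le_sub_iff_add_le']
    by_cases h : w ∈ Set.Iic (z - y)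
    · rw [Set.indicator_of_mem h, Set.indicator_of_mem (this.2 h)]
    · rw [Set.indicator_of_notMem h, Set.indicator_of_notMem (mt this.1 h)]
  rw [this, integral_indicator_const _ measurableSet_Iic]; simp

lemma measurable_real_Iic {k : ℕ} (ρ : Measure (Fin k → ℝ)) [IsProbabilityMeasure ρ]
    (z : Fin k → ℝ) : Measurable fun y => ρ.real (Set.Iic (z - y)) := by
  have hs : MeasurableSet {p : (Fin k → ℝ) × (Fin k → ℝ) | p.2 ≤ z - p.1} :=
    measurableSet_le measurable_snd (measurable_const.sub measurable_fst)
  exact (measurable_measure_prodMk_left hs).ennreal_toReal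

/-! ### Berry–Esseen bound for orthants -/

/-- `μ` and the Gaussian `nu L 1` are exchangeable up to `O(j^{-3/2})` in total variation after
convolution with `nu L j`. -/
def TVClose {k : ℕ} (L : (Fin k → ℝ) →L[ℝ] (Fin k → ℝ)) (μ : Measure (Fin k → ℝ)) (C : ℝ) : Prop :=
  ∀ j : ℕ, 0 < j → ∀ h : (Fin k → ℝ) → ℝ, Measurable h → ∀ M : ℝ, (∀ w, |h w| ≤ M) →
    |(∫ x, h x ∂(μ ∗ nu L j)) - ∫ x, h x ∂(nu L 1 ∗ nu L j)| ≤ M * (C * (Real.sqrt j ^ 3)⁻¹)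

/-- Exchange of one summand for a Gaussian. The distribution function of `mupow μ m` is written
as that of `nu L m` plus an error at most `Δ`. The exchange acts on the error with the smoothing
`nu L j`, and on the Gaussian part with the larger smoothing `nu L (m + j)`. -/
lemma swap_step {k : ℕ} {L : (Fin k → ℝ) →L[ℝ] (Fin k → ℝ)} {μ : Measure (Fin k → ℝ)}
    [IsProbabilityMeasure μ] {C : ℝ} (hTV : TVClose L μ C) (m j : ℕ) (hj : 0 < j) {Δ : ℝ}
    (hΔ : ∀ z, |(mupow μ m).real (Set.Iic z) - (nu L m).real (Set.Iic z)| ≤ Δ) (z : Fin k → ℝ) :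
    |(mupow μ (m + 1) ∗ nu L j).real (Set.Iic z) - (mupow μ m ∗ nu L (1 + j)).real (Set.Iic z)|
      ≤ Δ * (C * (Real.sqrt j ^ 3)⁻¹) + C * (Real.sqrt ((m + j : ℕ) : ℝ) ^ 3)⁻¹ := by
  have mF := measurable_real_Iic (mupow μ m) z
  have mG := measurable_real_Iic (nu L m) z
  have bnd : ∀ (ρ : Measure (Fin k → ℝ)) [IsProbabilityMeasure ρ] (y : Fin k → ℝ),
      |ρ.real (Set.Iic (z - y))| ≤ 1 := fun ρ _ y => by
    rw [abs_of_nonneg measureReal_nonneg]; exact measureReal_le_one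
  have key : ∀ σ : Measure (Fin k → ℝ), IsProbabilityMeasure σ →
      (mupow μ m ∗ σ).real (Set.Iic z)
        = (∫ y, ((mupow μ m).real (Set.Iic (z - y)) - (nu L m).real (Set.Iic (z - y))) ∂σ)
          + (nu L m ∗ σ).real (Set.Iic z) := by
    intro σ _
    rw [conv_real, conv_real, integral_sub (integrable_bdd mF (bnd _)) (integrable_bdd mG (bnd _))]
    ring
  have e1 : mupow μ (m + 1) ∗ nu L j = mupow μ m ∗ (μ ∗ nu L j) := by
    show (mupow μ m ∗ μ) ∗ nu L j = _
    rw [Measure.conv_assoc]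
  have e2 : nu L m ∗ (μ ∗ nu L j) = μ ∗ nu L (m + j) := by
    rw [Measure.conv_comm, Measure.conv_assoc, nu_conv, add_comm]
  have e3 : nu L m ∗ (nu L 1 ∗ nu L j) = nu L 1 ∗ nu L (m + j) := by
    rw [nu_conv, nu_conv, nu_conv]; congr 1; ring
  have t1 := hTV j hj _ (mF.sub mG) Δ (fun w => hΔ _)
  have t2 := hTV (m + j) (by omega) ((Set.Iic z).indicator fun _ => (1 : ℝ))
    (measurable_const.indicator measurableSet_Iic) 1
    (fun w => by by_cases h : w ∈ Set.Iic z <;> simp [h])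
  rw [integral_indicator_const _ measurableSet_Iic,
    integral_indicator_const _ measurableSet_Iic] at t2
  simp only [smul_eq_mul, mul_one, one_mul] at t2
  rw [e1, ← nu_conv L 1 j, key _ inferInstance, key _ inferInstance, e2, e3]
  have := abs_add_le
    ((∫ y, ((mupow μ m).real (Set.Iic (z - y)) - (nu L m).real (Set.Iic (z - y))) ∂(μ ∗ nu L j))
      - ∫ y, ((mupow μ m).real (Set.Iic (z - y)) - (nu L m).real (Set.Iic (z - y)))
          ∂(nu L 1 ∗ nu L j))
    ((μ ∗ nu L (m + j)).real (Set.Iic z) - (nu L 1 ∗ nu L (m + j)).real (Set.Iic z))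
  refine le_trans (le_of_eq ?_) (this.trans (add_le_add t1 t2))
  congr 1; ring

/-- The replacement argument of Lindeberg: the telescoping sum of `swap_step`, with an extra
smoothing `nu L K` so that even the last exchange is smoothed. -/
lemma smoothed_bound {k : ℕ} {L : (Fin k → ℝ) →L[ℝ] (Fin k → ℝ)} {μ : Measure (Fin k → ℝ)}
    [IsProbabilityMeasure μ] {C : ℝ} (hTV : TVClose L μ C) (K : ℕ) (hK : 1 ≤ K) (n : ℕ)
    (Δ : ℕ → ℝ)
    (hΔ : ∀ m < n, ∀ z, |(mupow μ m).real (Set.Iic z) - (nu L m).real (Set.Iic z)| ≤ Δ m)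
    (z : Fin k → ℝ) :
    |(mupow μ n ∗ nu L K).real (Set.Iic z) - (nu L (n + K)).real (Set.Iic z)|
      ≤ ∑ m ∈ Finset.range n, (Δ m * (C * (Real.sqrt ((n - 1 - m + K : ℕ) : ℝ) ^ 3)⁻¹)
          + C * (Real.sqrt ((n - 1 + K : ℕ) : ℝ) ^ 3)⁻¹) := by
  have h0 : (nu L (n + K)) = mupow μ 0 ∗ nu L (n - 0 + K) := by
    unfold mupow; rw [Measure.dirac_zero_conv]; simp
  have hn : mupow μ n ∗ nu L K = mupow μ n ∗ nu L (n - n + K) := by simp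
  rw [h0, hn, ← Finset.sum_range_sub (fun m => (mupow μ m ∗ nu L (n - m + K)).real (Set.Iic z))]
  refine (Finset.abs_sum_le_sum_abs _ _).trans (Finset.sum_le_sum fun m hm => ?_)
  have hm' := Finset.mem_range.1 hm
  have := swap_step hTV m (n - 1 - m + K) (by omega) (hΔ m hm') z
  have a1 : n - (m + 1) + K = n - 1 - m + K := by omega
  have a2 : n - m + K = 1 + (n - 1 - m + K) := by omega
  have a3 : m + (n - 1 - m + K) = n - 1 + K := by omega
  rw [a3] at this
  rw [a1, a2]
  exact this

/-- Every probability measure puts almost all of its mass on a cube. -/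
lemma exists_box {k : ℕ} (ρ : Measure (Fin k → ℝ)) [IsProbabilityMeasure ρ] {a : ℝ} (ha : a < 1) :
    ∃ s : ℝ, 0 ≤ s ∧ a ≤ ρ.real (Set.Icc (fun _ => -s) (fun _ => s)) := by
  have hmono : Monotone fun n : ℕ => Set.Icc (fun _ : Fin k => -(n : ℝ)) (fun _ => (n : ℝ)) := by
    intro m n hmn
    have : (m : ℝ) ≤ n := by exact_mod_cast hmn
    exact Set.Icc_subset_Icc (fun _ => neg_le_neg this) (fun _ => this)
  have hU : (⋃ n : ℕ, Set.Icc (fun _ : Fin k => -(n : ℝ)) (fun _ => (n : ℝ))) = Set.univ := by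
    refine Set.eq_univ_of_forall fun x => ?_
    obtain ⟨n, hn⟩ := exists_nat_ge ‖x‖
    refine Set.mem_iUnion.2 ⟨n, ?_⟩
    have := fun i => abs_le.1 ((Real.norm_eq_abs (x i) ▸ norm_le_pi_norm x i).trans hn)
    exact ⟨fun i => (this i).1, fun i => (this i).2⟩
  have ht := tendsto_measure_iUnion_atTop (μ := ρ) hmono
  rw [hU, measure_univ] at ht
  have ht' := (ENNReal.tendsto_toReal ENNReal.one_ne_top).comp ht
  rw [ENNReal.toReal_one] at ht'
  obtain ⟨n, hn⟩ := (ht'.eventually (lt_mem_nhds ha)).exists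
  exact ⟨n, by positivity, hn.le⟩

/-- Smoothing inequality for distribution functions. If `F` exceeds `G` at `z`, then by
monotonicity it still does so, up to `r`, at all points `z + s - y` with `y` in the box, and this
is seen by averaging over `y`; the part of `σ` outside the box costs at most a quarter of the
supremum, which is absorbed. -/
lemma smoothing {k : ℕ} (F G σ : Measure (Fin k → ℝ)) [IsProbabilityMeasure F]
    [IsProbabilityMeasure G] [IsProbabilityMeasure σ] {s r R : ℝ} (hr : 0 ≤ r)
    (hbox : 3 / 4 ≤ σ.real (Set.Icc (fun _ => -s) (fun _ => s)))
    (hG : ∀ z, G.real (Set.Iic (fun i => z i + 2 * s)) ≤ G.real (Set.Iic z) + r)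
    (hR : ∀ z, |(F ∗ σ).real (Set.Iic z) - (G ∗ σ).real (Set.Iic z)| ≤ R) (z : Fin k → ℝ) :
    |F.real (Set.Iic z) - G.real (Set.Iic z)| ≤ 2 * R + 2 * r := by
  let δ : (Fin k → ℝ) → ℝ := fun z => F.real (Set.Iic z) - G.real (Set.Iic z)
  have δ1 : ∀ z, |δ z| ≤ 1 := fun z => by
    have a := measureReal_nonneg (μ := F) (s := Set.Iic z)
    have b := measureReal_le_one (μ := F) (s := Set.Iic z)
    have c := measureReal_nonneg (μ := G) (s := Set.Iic z)
    have d := measureReal_le_one (μ := G) (s := Set.Iic z)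
    exact abs_le.2 ⟨by simp only [δ]; linarith, by simp only [δ]; linarith⟩
  have bdd : BddAbove (Set.range fun z => |δ z|) := ⟨1, by rintro _ ⟨z, rfl⟩; exact δ1 z⟩
  set Δ := ⨆ z, |δ z| with hΔ
  have hle : ∀ z, |δ z| ≤ Δ := fun z => le_ciSup bdd z
  have mono : ∀ (ρ : Measure (Fin k → ℝ)) [IsProbabilityMeasure ρ] (x y : Fin k → ℝ), x ≤ y →
      ρ.real (Set.Iic x) ≤ ρ.real (Set.Iic y) := fun ρ _ x y h =>
    measureReal_mono (Set.Iic_subset_Iic.2 h)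
  have mδ : ∀ z, Measurable fun y => δ (z - y) := fun z =>
    (measurable_real_Iic F z).sub (measurable_real_Iic G z)
  have bnd : ∀ (ρ : Measure (Fin k → ℝ)) [IsProbabilityMeasure ρ] (y : Fin k → ℝ),
      |ρ.real (Set.Iic y)| ≤ 1 := fun ρ _ y => by
    rw [abs_of_nonneg measureReal_nonneg]; exact measureReal_le_one
  have iδ : ∀ z, Integrable (fun y => δ (z - y)) σ := fun z => integrable_bdd (mδ z) fun w => δ1 _
  have hS : ∀ z, |∫ y, δ (z - y) ∂σ| ≤ R := by
    intro z
    have := hR z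
    rw [conv_real, conv_real, ← integral_sub (integrable_bdd (measurable_real_Iic F z)
      (fun _ => bnd _ _)) (integrable_bdd (measurable_real_Iic G z) (fun _ => bnd _ _))] at this
    exact this
  set box : Set (Fin k → ℝ) := Set.Icc (fun _ => -s) (fun _ => s)
  have mbox : MeasurableSet box := measurableSet_Icc
  -- averaging a function that is at least `a` on the box and at least `-Δ` elsewhere
  have avg : ∀ f : (Fin k → ℝ) → ℝ, Integrable f σ → ∀ b : ℝ, -Δ ≤ b → (∀ y ∈ box, b - r ≤ f y) →
      (∀ y, -Δ ≤ f y) → 3 / 4 * b - r - Δ / 4 ≤ ∫ y, f y ∂σ := by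
    intro f hf b hb h1 h2
    have i1 : Integrable (box.indicator fun _ => (b - r + Δ)) σ :=
      (integrable_const _).indicator mbox
    have i2 : Integrable (fun y => box.indicator (fun _ => (b - r + Δ)) y + -Δ) σ :=
      i1.add (integrable_const _)
    have hle : ∫ y, (box.indicator (fun _ => (b - r + Δ)) y + -Δ) ∂σ ≤ ∫ y, f y ∂σ := by
      refine integral_mono i2 hf fun y => ?_
      by_cases hy : y ∈ box
      · simp only [hy, Set.indicator_of_mem]; linarith [h1 y hy]
      · simp only [hy, not_false_eq_true, Set.indicator_of_notMem]; linarith [h2 y]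
    rw [integral_add i1 (integrable_const _), integral_indicator_const _ mbox] at hle
    simp only [smul_eq_mul, integral_const, probReal_univ, one_mul] at hle
    have p1 : σ.real box ≤ 1 := measureReal_le_one
    have q1 : 3 / 4 * (b + Δ) ≤ σ.real box * (b + Δ) :=
      mul_le_mul_of_nonneg_right hbox (by linarith)
    have q2 : σ.real box * r ≤ 1 * r := mul_le_mul_of_nonneg_right p1 hr
    have q3 : σ.real box * (b - r + Δ) = σ.real box * (b + Δ) - σ.real box * r := by ring
    linarith
  have up : ∀ z, 3 / 4 * δ z ≤ R + r + Δ / 4 := by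
    intro w
    have := avg (fun y => δ ((fun i => w i + s) - y)) (iδ _) (δ w)
      (neg_le_of_abs_le (hle w)) (fun y hy => by
        have l1 : F.real (Set.Iic w) ≤ F.real (Set.Iic ((fun i => w i + s) - y)) :=
          mono _ _ _ fun i => by have := hy.2 i; simp only [Pi.sub_apply]; linarith
        have l2 : G.real (Set.Iic ((fun i => w i + s) - y))
            ≤ G.real (Set.Iic (fun i => w i + 2 * s)) :=
          mono _ _ _ fun i => by have := hy.1 i; simp only [Pi.sub_apply]; linarith
        have := hG w
        simp only [δ]; linarith) (fun y => neg_le_of_abs_le (hle _))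
    have := (abs_le.1 (hS (fun i => w i + s))).2
    linarith
  have dn : ∀ z, 3 / 4 * (-δ z) ≤ R + r + Δ / 4 := by
    intro w
    have := avg (fun y => -δ ((fun i => w i - s) - y)) (iδ _).neg (-δ w)
      (by linarith [(abs_le.1 (hle w)).2]) (fun y hy => by
        have l1 : F.real (Set.Iic ((fun i => w i - s) - y)) ≤ F.real (Set.Iic w) :=
          mono _ _ _ fun i => by have := hy.1 i; simp only [Pi.sub_apply]; linarith
        have l2 : G.real (Set.Iic (fun i => w i - 2 * s))
            ≤ G.real (Set.Iic ((fun i => w i - s) - y)) :=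
          mono _ _ _ fun i => by have := hy.2 i; simp only [Pi.sub_apply]; linarith
        have := hG (fun i => w i - 2 * s)
        simp only [sub_add_cancel] at this
        have e : (fun i => w i) = w := rfl
        simp only [δ]; linarith) (fun y => neg_le_neg ((le_abs_self _).trans (hle _)))
    rw [integral_neg] at this
    have := (abs_le.1 (hS (fun i => w i - s))).1
    linarith
  have fin : Δ ≤ 4 / 3 * (R + r + Δ / 4) := ciSup_le fun z =>
    abs_le.2 ⟨by linarith [dn z], by linarith [up z]⟩
  have := hle z
  have e : |F.real (Set.Iic z) - G.real (Set.Iic z)| = |δ z| := rfl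
  rw [e]; linarith

/-- The error sum in `smoothed_bound` for the induction hypothesis `Δ m = B / √(m + 1)`. -/
lemma lindeberg_sum_le {S : ℝ} {K : ℕ} (hK : 1 ≤ K) {n : ℕ} (hn : 1 ≤ n)
    (hS : ∑ m ∈ Finset.range n, (Real.sqrt (m + 1))⁻¹ * (Real.sqrt ((n - 1 - m + K : ℕ) : ℝ) ^ 3)⁻¹
      ≤ S * (Real.sqrt (n + 1))⁻¹) {B C : ℝ} (hB : 0 ≤ B) (hC : 0 ≤ C) :
    ∑ m ∈ Finset.range n, (B * (Real.sqrt (m + 1))⁻¹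
        * (C * (Real.sqrt ((n - 1 - m + K : ℕ) : ℝ) ^ 3)⁻¹)
          + C * (Real.sqrt ((n - 1 + K : ℕ) : ℝ) ^ 3)⁻¹)
      ≤ (B * C * S + 2 * C) * (Real.sqrt (n + 1))⁻¹ := by
  have hn' : (1 : ℝ) ≤ n := by exact_mod_cast hn
  have hs : (Real.sqrt n)⁻¹ ≤ 2 * (Real.sqrt (n + 1))⁻¹ := by
    rw [← div_eq_mul_inv, inv_eq_one_div, div_le_div_iff₀ (by positivity) (by positivity), one_mul]
    rw [Real.sqrt_le_left (by positivity), mul_pow, Real.sq_sqrt (by positivity)]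
    linarith
  have h1 : Real.sqrt n ≤ Real.sqrt ((n - 1 + K : ℕ) : ℝ) :=
    Real.sqrt_le_sqrt (by exact_mod_cast (by omega))
  have hsn : 0 < Real.sqrt n := Real.sqrt_pos.2 (by linarith)
  have h2 : (n : ℝ) * (C * (Real.sqrt ((n - 1 + K : ℕ) : ℝ) ^ 3)⁻¹)
      ≤ 2 * C * (Real.sqrt (n + 1))⁻¹ := by
    calc (n : ℝ) * (C * (Real.sqrt ((n - 1 + K : ℕ) : ℝ) ^ 3)⁻¹)
        ≤ (n : ℝ) * (C * (Real.sqrt n ^ 3)⁻¹) := by gcongr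
      _ = C * (Real.sqrt n)⁻¹ := by
          have : (n : ℝ) = Real.sqrt n ^ 2 := (Real.sq_sqrt (by linarith)).symm
          nth_rewrite 1 [this]
          field_simp
      _ ≤ C * (2 * (Real.sqrt (n + 1))⁻¹) := by gcongr
      _ = _ := by ring
  rw [Finset.sum_add_distrib, Finset.sum_const, Finset.card_range, nsmul_eq_mul, add_mul]
  refine add_le_add ?_ h2
  calc ∑ m ∈ Finset.range n, B * (Real.sqrt (m + 1))⁻¹
        * (C * (Real.sqrt ((n - 1 - m + K : ℕ) : ℝ) ^ 3)⁻¹)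
      = (B * C) * ∑ m ∈ Finset.range n,
          (Real.sqrt (m + 1))⁻¹ * (Real.sqrt ((n - 1 - m + K : ℕ) : ℝ) ^ 3)⁻¹ := by
        rw [Finset.mul_sum]
        exact Finset.sum_congr rfl fun m _ => by ring
    _ ≤ (B * C) * (S * (Real.sqrt (n + 1))⁻¹) := by gcongr
    _ = _ := by ring

/-- A Berry–Esseen bound for orthants, by strong induction on `n`. The bounds for smaller `n` are
used in `smoothed_bound` in place of a smoothness property of `mupow μ m`. The hypothesis `hAC`
controls the Gaussian measure of strips around orthants. -/
theorem berry_esseen {k : ℕ} {L : (Fin k → ℝ) →L[ℝ] (Fin k → ℝ)} {μ : Measure (Fin k → ℝ)}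
    [IsProbabilityMeasure μ] {C : ℝ} (hC : 0 ≤ C) (hTV : TVClose L μ C) {C' : ℝ} (hC' : 0 ≤ C')
    (hAC : ∀ n : ℕ, 1 ≤ n → ∀ s : ℝ, 0 ≤ s → ∀ z : Fin k → ℝ,
      (nu L n).real (Set.Iic (fun i => z i + s)) ≤ (nu L n).real (Set.Iic z)
        + C' * s * (Real.sqrt n)⁻¹) :
    ∃ B : ℝ, 0 ≤ B ∧ ∀ (n : ℕ) (z : Fin k → ℝ),
      |(mupow μ n).real (Set.Iic z) - (nu L n).real (Set.Iic z)| ≤ B * (Real.sqrt (n + 1))⁻¹ := by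
  obtain ⟨S, hS0, hS⟩ := eta_bound
  -- `K` is chosen so large that the induction closes
  obtain ⟨K, hK1, hKs⟩ : ∃ K : ℕ, 1 ≤ K ∧ 4 * C * (S * (K : ℝ) ^ (-1/4 : ℝ)) ≤ 1 := by
    have h : Tendsto (fun K : ℕ => 4 * C * (S * (K : ℝ) ^ (-1/4 : ℝ))) atTop (nhds (4 * C * (S * 0))) := by
      refine Tendsto.const_mul _ (Tendsto.const_mul _ ?_)
      have := (tendsto_rpow_neg_atTop (show (0 : ℝ) < 1/4 by norm_num)).comp
        (tendsto_natCast_atTop_atTop (R := ℝ))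
      refine this.congr fun K => ?_
      simp only [Function.comp]; norm_num
    have h2 := h.eventually (gt_mem_nhds (show 4 * C * (S * 0) < 1 by simp))
    obtain ⟨K, h3, h4⟩ := (h2.and (eventually_ge_atTop 1)).exists
    exact ⟨K, h4, h3.le⟩
  set S' := S * (K : ℝ) ^ (-1/4 : ℝ) with hS'
  have hS'0 : 0 ≤ S' := by positivity
  obtain ⟨s, hs0, hs⟩ := exists_box (nu L K) (show (3 / 4 : ℝ) < 1 by norm_num)
  set B := 2 * (4 * C + 8 * C' * s) with hBdef
  have hB : 0 ≤ B := by positivity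
  refine ⟨B, hB, fun n => ?_⟩
  induction n using Nat.strong_induction_on with
  | _ n ih =>
  intro z
  rcases Nat.eq_zero_or_pos n with rfl | hn
  · rw [nu_zero]; unfold mupow; simpa using hB
  have hn' : (1 : ℝ) ≤ n := by exact_mod_cast hn
  have hsq : (Real.sqrt n)⁻¹ ≤ 2 * (Real.sqrt (n + 1))⁻¹ := by
    rw [← div_eq_mul_inv, inv_eq_one_div, div_le_div_iff₀ (by positivity) (by positivity), one_mul]
    rw [Real.sqrt_le_left (by positivity), mul_pow, Real.sq_sqrt (by positivity)]
    linarith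
  have sm := smoothed_bound hTV K hK1 n (fun m => B * (Real.sqrt (m + 1))⁻¹) ih
  have hsum := lindeberg_sum_le hK1 hn (hS K hK1 n) hB hC
  have fin := smoothing (mupow μ n) (nu L n) (nu L K)
    (r := C' * (2 * s) * (Real.sqrt n)⁻¹) (by positivity) hs
    (fun z => hAC n hn (2 * s) (by positivity) z)
    (fun z => by rw [nu_conv]; exact (sm z).trans hsum) z
  refine fin.trans ?_
  have e1 : C' * (2 * s) * (Real.sqrt n)⁻¹ ≤ C' * (2 * s) * (2 * (Real.sqrt (n + 1))⁻¹) := by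
    gcongr
  have hp : 0 ≤ (Real.sqrt (n + 1))⁻¹ := by positivity
  have e2 : 2 * (B * C * S' + 2 * C) + 2 * (C' * (2 * s) * 2) ≤ B := by
    have : B * (4 * C * S') ≤ B * 1 := mul_le_mul_of_nonneg_left hKs hB
    linarith
  calc _ ≤ 2 * ((B * C * S' + 2 * C) * (Real.sqrt (n + 1))⁻¹)
        + 2 * (C' * (2 * s) * (2 * (Real.sqrt (n + 1))⁻¹)) := by gcongr
    _ = (2 * (B * C * S' + 2 * C) + 2 * (C' * (2 * s) * 2)) * (Real.sqrt (n + 1))⁻¹ := by ring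
    _ ≤ _ := mul_le_mul_of_nonneg_right e2 hp

/-! ### Moments, singular covariances and Gaussian strips -/

/-- `τ` is centred, has covariance matrix `V` and a finite absolute third moment. -/
structure Mom {k : ℕ} (τ : Measure (Fin k → ℝ)) (V : Matrix (Fin k) (Fin k) ℝ) : Prop where
  third : Integrable (fun x => ‖x‖ ^ 3) τ
  mean : ∀ i, ∫ x, x i ∂τ = 0
  cov : ∀ i l, ∫ x, x i * x l ∂τ = V i l

/-- Multiplication by a matrix, as a continuous linear map. -/
noncomputable def matCLM {k : ℕ} (A : Matrix (Fin k) (Fin k) ℝ) :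
    (Fin k → ℝ) →L[ℝ] (Fin k → ℝ) := LinearMap.toContinuousLinearMap (Matrix.mulVecLin A)

lemma matCLM_apply {k : ℕ} (A : Matrix (Fin k) (Fin k) ℝ) (w : Fin k → ℝ) (i : Fin k) :
    matCLM A w i = ∑ l, A i l * w l := rfl

/-- A linear image of a centred law has covariance `B V Bᵀ`. -/
lemma Mom.map {k : ℕ} {τ : Measure (Fin k → ℝ)} [IsProbabilityMeasure τ]
    {V : Matrix (Fin k) (Fin k) ℝ} (h : Mom τ V) (B : Matrix (Fin k) (Fin k) ℝ) :
    Mom (τ.map (matCLM B)) (B * V * B.transpose) := by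
  have hm : AEMeasurable (matCLM B) τ := (matCLM B).continuous.measurable.aemeasurable
  refine ⟨?_, fun i => ?_, fun i l => ?_⟩
  · rw [integrable_map_measure (by fun_prop) hm]
    refine (h.third.const_mul (‖matCLM B‖ ^ 3)).mono' (by fun_prop) (ae_of_all _ fun x => ?_)
    simp only [Function.comp]
    rw [Real.norm_of_nonneg (by positivity), ← mul_pow]
    gcongr
    exact (matCLM B).le_opNorm x
  · rw [integral_map hm (measurable_pi_apply i).aestronglyMeasurable]
    simp only [matCLM_apply]
    rw [integral_finsetSum _ fun l _ => (integrable_of_cube h.third l l).1.const_mul _]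
    simp [integral_const_mul, h.mean]
  · rw [integral_map hm (by fun_prop)]
    simp only [matCLM_apply, Finset.sum_mul_sum]
    have hi : ∀ a b, Integrable (fun x : Fin k → ℝ => B i a * x a * (B l b * x b)) τ := by
      intro a b
      refine ((integrable_of_cube h.third a b).2.const_mul (B i a * B l b)).congr
        (ae_of_all _ fun x => ?_)
      simp only; ring
    rw [integral_finsetSum _ fun a _ => integrable_finsetSum _ fun b _ => hi a b]
    simp_rw [integral_finsetSum _ fun b _ => hi _ b]
    have e : ∀ a b, ∫ x : Fin k → ℝ, B i a * x a * (B l b * x b) ∂τ = B i a * V a b * B l b := by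
      intro a b
      rw [← h.cov a b]
      have : (fun x : Fin k → ℝ => B i a * x a * (B l b * x b))
        = fun x => (B i a * B l b) * (x a * x b) := by ext x; ring
      rw [this, integral_const_mul]; ring
    simp_rw [e]
    simp only [Matrix.mul_apply, Matrix.transpose_apply, Finset.sum_mul]
    rw [Finset.sum_comm]

lemma gv_mom (k : ℕ) : Mom (gv k 1) 1 := by
  have mp : ∀ i : Fin k, MeasurePreserving (fun w : Fin k → ℝ => w i) (gv k 1) (gaussianReal 0 1) :=
    fun i => measurePreserving_eval (fun _ : Fin k => gaussianReal 0 1) i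
  have hz : ∀ i : Fin k, ∫ x : Fin k → ℝ, x i ∂gv k 1 = 0 := by
    intro i
    rw [← integral_id_gaussianReal (μ := 0) (v := 1), ← (mp i).map_eq,
      integral_map (measurable_pi_apply i).aemeasurable (by fun_prop)]
  refine ⟨?_, fun i => ?_, fun i l => ?_⟩
  · refine ((integrable_exp_sum_abs k 1).const_mul 6).mono' (by fun_prop) (ae_of_all _ fun w => ?_)
    rw [Real.norm_of_nonneg (by positivity), one_mul]
    set S := ∑ i, |w i|
    have hS : ‖w‖ ≤ S := (pi_norm_le_iff_of_nonneg (by positivity)).2 fun i => by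
      rw [Real.norm_eq_abs]
      exact Finset.single_le_sum (f := fun i => |w i|) (fun j _ => abs_nonneg _) (Finset.mem_univ i)
    have h0 : 0 ≤ S := (norm_nonneg w).trans hS
    have := Real.pow_div_factorial_le_exp S h0 3
    norm_num [Nat.factorial] at this
    calc ‖w‖ ^ 3 ≤ S ^ 3 := by gcongr
      _ ≤ _ := by linarith
  · exact hz i
  · have hsq : ∀ i : Fin k, ∫ x : Fin k → ℝ, x i * x i ∂gv k 1 = 1 := by
      intro i
      have h1 : ∫ y, y * y ∂gaussianReal 0 1 = 1 := by
        have := variance_id_gaussianReal (μ := 0) (v := 1)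
        rw [variance_eq_integral (by fun_prop)] at this
        simp only [id, integral_id_gaussianReal, sub_zero, NNReal.coe_one] at this
        rw [← this]
        congr 1; ext y; ring
      rw [← h1, ← (mp i).map_eq,
        integral_map (measurable_pi_apply i).aemeasurable (by fun_prop)]
    by_cases hil : i = l
    · subst hil; rw [hsq, Matrix.one_apply_eq]
    · rw [Matrix.one_apply_ne hil]
      have hI : iIndepFun (fun (i : Fin k) (w : Fin k → ℝ) => w i) (gv k 1) :=
        iIndepFun_pi (μ := fun _ : Fin k => gaussianReal 0 1) (X := fun _ x => x)
          (fun _ => aemeasurable_id)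
      have := (hI.indepFun hil).integral_mul_eq_mul_integral
        (measurable_pi_apply i).aestronglyMeasurable (measurable_pi_apply l).aestronglyMeasurable
      have e : ∫ x : Fin k → ℝ, x i * x l ∂gv k 1
        = (∫ x : Fin k → ℝ, x i ∂gv k 1) * ∫ x : Fin k → ℝ, x l ∂gv k 1 := this
      rw [e, hz i, zero_mul]

lemma nu_one_mom {k : ℕ} (A : Matrix (Fin k) (Fin k) ℝ) :
    Mom (nu (matCLM A) 1) (A * A.transpose) := by
  have := (gv_mom k).map A
  rw [mul_one] at this
  unfold nu; simpa using this

/-- A square matrix has a generalized inverse. -/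
lemma exists_ginv {k : ℕ} (A : Matrix (Fin k) (Fin k) ℝ) :
    ∃ B : Matrix (Fin k) (Fin k) ℝ, A * B * A = A := by
  obtain ⟨g, hg⟩ := LinearMap.exists_rightInverse_of_surjective
    (Matrix.toLin' A).rangeRestrict (LinearMap.range_rangeRestrict _)
  obtain ⟨B, hB⟩ := LinearMap.exists_extend g
  refine ⟨LinearMap.toMatrix' B, Matrix.toLin'.injective ?_⟩
  rw [Matrix.toLin'_mul, Matrix.toLin'_mul, Matrix.toLin'_toMatrix']
  refine LinearMap.ext fun w => ?_
  simp only [LinearMap.comp_apply]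
  have h1 : B (Matrix.toLin' A w) = g ((Matrix.toLin' A).rangeRestrict w) := by
    rw [← hB]; rfl
  rw [h1]
  exact congrArg Subtype.val (LinearMap.congr_fun hg ((Matrix.toLin' A).rangeRestrict w))

/-- A law with covariance `A Aᵀ` is carried by the range of `A`. -/
lemma Mom.factor {k : ℕ} {τ : Measure (Fin k → ℝ)} [IsProbabilityMeasure τ]
    {A B : Matrix (Fin k) (Fin k) ℝ} (h : Mom τ (A * A.transpose)) (hB : A * B * A = A) :
    (τ.map (matCLM B)).map (matCLM A) = τ := by
  -- the image under `1 - A * B` has covariance zero, hence vanishes almost surely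
  have hM := h.map (1 - A * B)
  have hz : (1 - A * B) * (A * A.transpose) * (1 - A * B).transpose = 0 := by
    have : (1 - A * B) * A = 0 := by rw [sub_mul, one_mul, hB, sub_self]
    rw [← mul_assoc, this, zero_mul, zero_mul]
  rw [hz] at hM
  have hm : ∀ M : Matrix (Fin k) (Fin k) ℝ, Measurable (matCLM M) := fun M =>
    (matCLM M).continuous.measurable
  have : IsProbabilityMeasure (τ.map (matCLM (1 - A * B))) :=
    Measure.isProbabilityMeasure_map (hm _).aemeasurable
  have hcoord : ∀ i, ∀ᵐ x ∂τ, matCLM (1 - A * B) x i = 0 := by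
    intro i
    have h1 := hM.cov i i
    have h2 := (integrable_of_cube hM.third i i).2
    rw [integrable_map_measure (by fun_prop) (hm _).aemeasurable] at h2
    rw [integral_map (hm _).aemeasurable (by fun_prop)] at h1
    have h3 := (integral_eq_zero_iff_of_nonneg (fun x => mul_self_nonneg _) h2).1 h1
    filter_upwards [h3] with x hx
    exact mul_self_eq_zero.1 hx
  have hae : (fun x => matCLM A (matCLM B x)) =ᵐ[τ] id := by
    filter_upwards [ae_all_iff.2 hcoord] with x hx
    have h0 : matCLM (1 - A * B) x = 0 := funext hx
    have h1 : (1 - A * B).mulVec x = 0 := h0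
    rw [Matrix.sub_mulVec, Matrix.one_mulVec, sub_eq_zero, ← Matrix.mulVec_mulVec] at h1
    exact h1.symm
  rw [Measure.map_map (hm A) (hm B)]
  exact (Measure.map_congr hae).trans Measure.map_id

/-- The moments of `μ` and of `nu (matCLM A) 1` agree. Pulling both laws back by a generalized
inverse of `A` makes `tv_conv` applicable also when the covariance is singular. -/
lemma Mom.tvClose {k : ℕ} {μ : Measure (Fin k → ℝ)} [IsProbabilityMeasure μ]
    {A : Matrix (Fin k) (Fin k) ℝ} (h : Mom μ (A * A.transpose)) :
    ∃ C : ℝ, 0 ≤ C ∧ TVClose (matCLM A) μ C := by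
  obtain ⟨B, hB⟩ := exists_ginv A
  have hν := nu_one_mom A
  have f1 := h.factor hB
  have f2 := hν.factor hB
  have m1 := h.map B
  have m2 := hν.map B
  have hm : AEMeasurable (matCLM B) μ := (matCLM B).continuous.measurable.aemeasurable
  have hm' : AEMeasurable (matCLM B) (nu (matCLM A) 1) :=
    (matCLM B).continuous.measurable.aemeasurable
  have : IsProbabilityMeasure (μ.map (matCLM B)) := Measure.isProbabilityMeasure_map hm
  have : IsProbabilityMeasure ((nu (matCLM A) 1).map (matCLM B)) :=
    Measure.isProbabilityMeasure_map hm'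
  refine ⟨tvC k * ((∫ x, ‖x‖ ^ 3 ∂(μ.map (matCLM B)))
    + ∫ x, ‖x‖ ^ 3 ∂((nu (matCLM A) 1).map (matCLM B))), ?_, fun j hj g hg M hM => ?_⟩
  swap
  · have := tv_conv (matCLM A) m1.third m2.third (fun i => by rw [m1.mean, m2.mean])
      (fun i l => by rw [m1.cov, m2.cov]) j hj hg hM
    rw [f1, f2] at this
    exact this
  · exact mul_nonneg (tvC_pos k).le (add_nonneg (integral_nonneg fun x => by positivity)
      (integral_nonneg fun x => by positivity))

/-- The Gaussian density is at most `1 / √v`. -/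
lemma gaussianReal_Ioc_le (m : ℝ) {v : ℝ≥0} (hv : v ≠ 0) {a b : ℝ} (hab : a ≤ b) :
    (gaussianReal m v).real (Set.Ioc a b) ≤ (b - a) * (Real.sqrt v)⁻¹ := by
  have hv' : (0 : ℝ) < v := lt_of_le_of_ne v.2 (fun h => hv (by exact_mod_cast h.symm))
  rw [measureReal_def, gaussianReal_apply_eq_integral _ hv, ENNReal.toReal_ofReal
    (integral_nonneg fun x => gaussianPDFReal_nonneg _ _ _)]
  have hb : ∀ x, gaussianPDFReal m v x ≤ (Real.sqrt v)⁻¹ := by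
    intro x
    unfold gaussianPDFReal
    have e1 : Real.exp (-(x - m) ^ 2 / (2 * v)) ≤ 1 := Real.exp_le_one_iff.2 (by
      rw [neg_div]; exact neg_nonpos.2 (by positivity))
    have e2 : (Real.sqrt (2 * Real.pi * v))⁻¹ ≤ (Real.sqrt v)⁻¹ := by
      gcongr
      nlinarith [Real.pi_gt_three]
    calc _ ≤ (Real.sqrt v)⁻¹ * 1 := mul_le_mul e2 e1 (Real.exp_pos _).le (by positivity)
      _ = _ := mul_one _
  have := setIntegral_mono_on (μ := volume) (s := Set.Ioc a b)
    (integrable_gaussianPDFReal m v).integrableOn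
    (integrableOn_const (C := (Real.sqrt v)⁻¹) (by simp)) measurableSet_Ioc (fun x _ => hb x)
  refine this.trans (le_of_eq ?_)
  rw [setIntegral_const, measureReal_def, Real.volume_Ioc, ENNReal.toReal_ofReal (by linarith),
    smul_eq_mul]

lemma gv_isGaussian (k : ℕ) (v : ℝ≥0) : IsGaussian (gv k v) := by
  have hI : iIndepFun (fun (i : Fin k) (w : Fin k → ℝ) => w i) (gv k v) :=
    iIndepFun_pi (μ := fun _ : Fin k => gaussianReal 0 v) (X := fun _ x => x)
      (fun _ => aemeasurable_id)
  have hG : ∀ i : Fin k, HasGaussianLaw (fun w : Fin k → ℝ => w i) (gv k v) := fun i =>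
    ⟨by
      have := (measurePreserving_eval (fun _ : Fin k => gaussianReal 0 v) i).map_eq
      unfold gv
      have e : (Measure.pi fun _ : Fin k => gaussianReal 0 v).map (fun w => w i)
        = gaussianReal 0 v := this
      rw [e]; infer_instance⟩
  have := (hI.hasGaussianLaw hG).isGaussian_map
  have e : (gv k v).map (fun w i => w i) = gv k v := Measure.map_id
  rwa [e] at this

/-- Gaussian scaling: the law at time `n` is the law at time `1` dilated by `√n`. -/
lemma nu_scale {k : ℕ} (A : Matrix (Fin k) (Fin k) ℝ) (n : ℕ) :
    nu (matCLM A) n = (nu (matCLM A) 1).map (fun x i => Real.sqrt n * x i) := by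
  have hL : Measurable (matCLM A) := (matCLM A).continuous.measurable
  have h1 := gv_scale k (n : ℝ≥0)
  unfold nu
  rw [← h1, Measure.map_map hL (by fun_prop), Measure.map_map (by fun_prop) hL, Nat.cast_one]
  congr 1
  ext w l
  simp only [Function.comp, matCLM_apply, Finset.mul_sum]
  refine Finset.sum_congr rfl fun a _ => ?_
  simp only [NNReal.coe_natCast]
  ring

/-- The one-dimensional marginals of `nu L n`. -/
lemma nu_marginal {k : ℕ} (A : Matrix (Fin k) (Fin k) ℝ) (n : ℕ) (i : Fin k) :
    (nu (matCLM A) n).map (fun x => x i)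
      = gaussianReal 0 (n * ((A * A.transpose) i i).toNNReal) := by
  have hm := nu_one_mom A
  have hL : Measurable (matCLM A) := (matCLM A).continuous.measurable
  have base : (nu (matCLM A) 1).map (fun x => x i)
      = gaussianReal 0 (((A * A.transpose) i i).toNNReal) := by
    have := gv_isGaussian k (1 : ℕ)
    have : IsGaussian (nu (matCLM A) 1) := by unfold nu; infer_instance
    have := IsGaussian.map_eq_gaussianReal (μ := nu (matCLM A) 1)
      (ContinuousLinearMap.proj (R := ℝ) (φ := fun _ : Fin k => ℝ) i)
    have e1 : ∫ x, (ContinuousLinearMap.proj (R := ℝ) (φ := fun _ : Fin k => ℝ) i) x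
        ∂nu (matCLM A) 1 = 0 := hm.mean i
    have e2 : Var[(ContinuousLinearMap.proj (R := ℝ) (φ := fun _ : Fin k => ℝ) i);
        nu (matCLM A) 1] = (A * A.transpose) i i := by
      rw [variance_eq_integral (by fun_prop), e1, ← hm.cov i i]
      congr 1; ext x
      show (x i - 0) ^ 2 = _
      ring
    rw [e1, e2] at this
    exact this
  have hs := nu_scale A n
  rw [hs, Measure.map_map (measurable_pi_apply i) (by fun_prop)]
  have e : (nu (matCLM A) 1).map ((fun x : Fin k → ℝ => x i) ∘ fun x i => Real.sqrt n * x i)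
      = ((nu (matCLM A) 1).map (fun x => x i)).map (fun y => Real.sqrt n * y) :=
    (Measure.map_map (measurable_const_mul (Real.sqrt n)) (measurable_pi_apply i)).symm
  rw [e, base, gaussianReal_map_const_mul, mul_zero]
  congr 2
  ext
  simp [Real.sq_sqrt]

/-- The strip between an orthant and its translate by `s` is contained in `k` slabs, each of
Gaussian measure `O(s / √n)` because the marginals are nondegenerate. -/
lemma nu_strip {k : ℕ} (A : Matrix (Fin k) (Fin k) ℝ) (hV : ∀ i, 0 < (A * A.transpose) i i)
    (n : ℕ) (hn : 1 ≤ n) (s : ℝ) (hs : 0 ≤ s) (z : Fin k → ℝ) :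
    (nu (matCLM A) n).real (Set.Iic (fun i => z i + s)) ≤ (nu (matCLM A) n).real (Set.Iic z)
        + (∑ i, (Real.sqrt ((A * A.transpose) i i))⁻¹) * s * (Real.sqrt n)⁻¹ := by
  have hsub : Set.Iic (fun i => z i + s)
      ⊆ Set.Iic z ∪ ⋃ i ∈ (Finset.univ : Finset (Fin k)), {x | x i ∈ Set.Ioc (z i) (z i + s)} := by
    intro x hx
    by_cases h : x ≤ z
    · exact Or.inl h
    · right
      simp only [Pi.le_def, not_forall, not_le] at h
      obtain ⟨i, hi⟩ := h
      exact Set.mem_biUnion (Finset.mem_univ i) ⟨hi, hx i⟩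
  have h1 := (measureReal_mono (μ := nu (matCLM A) n) hsub).trans (measureReal_union_le _ _)
  have h2 : ∀ i, (nu (matCLM A) n).real {x | x i ∈ Set.Ioc (z i) (z i + s)}
      ≤ (Real.sqrt ((A * A.transpose) i i))⁻¹ * s * (Real.sqrt n)⁻¹ := by
    intro i
    have e : (nu (matCLM A) n).real {x | x i ∈ Set.Ioc (z i) (z i + s)}
        = ((nu (matCLM A) n).map (fun x => x i)).real (Set.Ioc (z i) (z i + s)) := by
      rw [measureReal_def, measureReal_def, Measure.map_apply (measurable_pi_apply i)
        measurableSet_Ioc]; rfl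
    rw [e, nu_marginal]
    have hv : ((n : ℝ≥0) * ((A * A.transpose) i i).toNNReal) ≠ 0 := by
      refine mul_ne_zero (by exact_mod_cast (by omega)) ?_
      exact (Real.toNNReal_pos.2 (hV i)).ne'
    refine (gaussianReal_Ioc_le 0 hv (by linarith)).trans (le_of_eq ?_)
    rw [NNReal.coe_mul, Real.coe_toNNReal _ (hV i).le, NNReal.coe_natCast,
      Real.sqrt_mul (by positivity), mul_inv]
    ring
  have h3 := measureReal_biUnion_finset_le (μ := nu (matCLM A) n) (Finset.univ : Finset (Fin k))
    (fun i => {x : Fin k → ℝ | x i ∈ Set.Ioc (z i) (z i + s)})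
  have h4 := Finset.sum_le_sum fun (i : Fin k) (_ : i ∈ Finset.univ) => h2 i
  rw [← Finset.sum_mul, ← Finset.sum_mul] at h4
  linarith

/-- Berry–Esseen bound for orthants, for a centred law with covariance `A Aᵀ`. -/
theorem Mom.berry_esseen {k : ℕ} {μ : Measure (Fin k → ℝ)} [IsProbabilityMeasure μ]
    {A : Matrix (Fin k) (Fin k) ℝ} (h : Mom μ (A * A.transpose))
    (hV : ∀ i, 0 < (A * A.transpose) i i) :
    ∃ B : ℝ, 0 ≤ B ∧ ∀ (n : ℕ) (z : Fin k → ℝ),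
      |(mupow μ n).real (Set.Iic z) - (nu (matCLM A) n).real (Set.Iic z)|
        ≤ B * (Real.sqrt (n + 1))⁻¹ := by
  obtain ⟨C, hC, hT⟩ := h.tvClose
  exact _root_.berry_esseen hC hT (Finset.sum_nonneg fun i _ => by positivity)
    (fun n hn s hs z => nu_strip A hV n hn s hs z)

/-! ### Growth of the Gaussian measure of orthants -/

/-- Invariance of a centred Gaussian law under rotation of two independent copies. -/
lemma nu_rotate {k : ℕ} (L : (Fin k → ℝ) →L[ℝ] (Fin k → ℝ)) (θ : ℝ) :
    ((nu L 1).prod (nu L 1)).map (fun p : (Fin k → ℝ) × (Fin k → ℝ) =>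
      Real.cos θ • p.1 + Real.sin θ • p.2) = nu L 1 := by
  have h : MeasurePreserving (fun p : ℝ × ℝ => Real.cos θ * p.1 + Real.sin θ * p.2)
      ((gaussianReal 0 1).prod (gaussianReal 0 1)) (gaussianReal 0 1) := by
    refine ⟨by fun_prop, ?_⟩
    have e : ((gaussianReal 0 1).prod (gaussianReal 0 1)).map
        (fun p : ℝ × ℝ => Real.cos θ * p.1 + Real.sin θ * p.2)
        = ((gaussianReal 0 1).map (fun x => Real.cos θ * x))
          ∗ ((gaussianReal 0 1).map (fun x => Real.sin θ * x)) := by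
      unfold Measure.conv
      rw [Measure.map_prod_map _ _ (measurable_const_mul _) (measurable_const_mul _),
        Measure.map_map (by fun_prop) (by fun_prop)]
      rfl
    rw [e, gaussianReal_map_const_mul, gaussianReal_map_const_mul,
      gaussianReal_conv_gaussianReal]
    congr 1
    · simp
    · ext; simp
  have h2 := (pi_combine (k := k) (fun _ p => Real.cos θ * p.1 + Real.sin θ * p.2) (fun _ => h))
  have h3 : ((gv k 1).prod (gv k 1)).map (fun p : (Fin k → ℝ) × (Fin k → ℝ) =>
      Real.cos θ • p.1 + Real.sin θ • p.2) = gv k 1 := h2.map_eq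
  have hL : Measurable L := L.continuous.measurable
  unfold nu
  rw [Measure.map_prod_map _ _ hL hL, Measure.map_map (by fun_prop) (by fun_prop), Nat.cast_one]
  conv_rhs => rw [← h3, Measure.map_map hL (by fun_prop)]
  congr 1
  ext p
  simp [Function.comp]

/-- A path rotating from a point of an orthant to a point outside the enlarged orthant spends a
time at least `s / (2 * R)` in the strip between the two: after its last visit to the smaller
orthant at time `θ0`, it moves at speed at most `2 * R` in each coordinate. -/
lemma strip_time {k : ℕ} {z x y : Fin k → ℝ} {s R : ℝ} (hs : 0 < s) (hR : 0 < R)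
    (hx : x ≤ z) (hy : ¬ y ≤ fun i => z i + s) (hxR : ∀ i, |x i| ≤ R) (hyR : ∀ i, |y i| ≤ R) :
    ENNReal.ofReal (s / (2 * R)) ≤ (volume.restrict (Set.Icc 0 (Real.pi / 2)))
      {θ : ℝ | Real.cos θ • x + Real.sin θ • y ∈ Set.Iic (fun i => z i + s) \ Set.Iic z} := by
  let f : ℝ → Fin k → ℝ := fun θ => Real.cos θ • x + Real.sin θ • y
  have hf : Continuous f := by fun_prop
  have hpi := Real.pi_pos
  set S : Set ℝ := Set.Icc 0 (Real.pi / 2) ∩ f ⁻¹' Set.Iic z with hS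
  have hSc : IsCompact S := isCompact_Icc.inter_right (isClosed_Iic.preimage hf)
  have h0 : (0 : ℝ) ∈ S := ⟨⟨le_rfl, by positivity⟩, by simpa [f] using hx⟩
  obtain ⟨θ0, hθ0, hmax⟩ := hSc.exists_isGreatest ⟨0, h0⟩
  have lip : ∀ θ i, f θ i ≤ f θ0 i + 2 * R * |θ - θ0| := by
    intro θ i
    have c1 : |Real.cos θ - Real.cos θ0| ≤ |θ - θ0| := Real.abs_cos_sub_cos_le θ θ0
    have c2 : |Real.sin θ - Real.sin θ0| ≤ |θ - θ0| := Real.abs_sin_sub_sin_le θ θ0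
    have e : f θ i - f θ0 i = (Real.cos θ - Real.cos θ0) * x i + (Real.sin θ - Real.sin θ0) * y i := by
      simp only [f, Pi.add_apply, Pi.smul_apply, smul_eq_mul]; ring
    have b1 : (Real.cos θ - Real.cos θ0) * x i ≤ |θ - θ0| * R := (le_abs_self _).trans (by
      rw [abs_mul]; exact mul_le_mul c1 (hxR i) (abs_nonneg _) (abs_nonneg _))
    have b2 : (Real.sin θ - Real.sin θ0) * y i ≤ |θ - θ0| * R := (le_abs_self _).trans (by
      rw [abs_mul]; exact mul_le_mul c2 (hyR i) (abs_nonneg _) (abs_nonneg _))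
    linarith
  have hnear : ∀ θ, |θ - θ0| ≤ s / (2 * R) → f θ ∈ Set.Iic (fun i => z i + s) := by
    intro θ hθ i
    have h1 := lip θ i
    have h2 : f θ0 i ≤ z i := hθ0.2 i
    rw [le_div_iff₀ (by positivity)] at hθ
    show f θ i ≤ z i + s
    linarith
  have hend : θ0 + s / (2 * R) ≤ Real.pi / 2 := by
    by_contra hcon
    push Not at hcon
    have := hnear (Real.pi / 2) (by rw [abs_of_nonneg (by linarith [hθ0.1.2])]; linarith)
    apply hy
    simpa [f] using this
  have hpos : 0 < s / (2 * R) := by positivity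
  have hsub : Set.Ioc θ0 (θ0 + s / (2 * R)) ⊆ {θ : ℝ | f θ ∈ Set.Iic (fun i => z i + s) \ Set.Iic z}
      ∩ Set.Icc 0 (Real.pi / 2) := by
    intro θ hθ
    have hI : θ ∈ Set.Icc 0 (Real.pi / 2) := ⟨hθ0.1.1.trans hθ.1.le, hθ.2.trans hend⟩
    refine ⟨⟨hnear θ ?_, fun hz => ?_⟩, hI⟩
    · rw [abs_of_pos (by linarith [hθ.1])]; linarith [hθ.2]
    · exact absurd (hmax ⟨hI, hz⟩) (not_le.2 hθ.1)
  have hmeas : MeasurableSet {θ : ℝ | f θ ∈ Set.Iic (fun i => z i + s) \ Set.Iic z} :=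
    hf.measurable (measurableSet_Iic.diff measurableSet_Iic)
  show _ ≤ (volume.restrict (Set.Icc 0 (Real.pi / 2))) {θ : ℝ | f θ ∈ Set.Iic (fun i => z i + s) \ Set.Iic z}
  rw [Measure.restrict_apply hmeas]
  refine le_trans (le_of_eq ?_) (measure_mono hsub)
  rw [Real.volume_Ioc]; congr 1; ring

/-- Lower bound for the measure of a strip around an orthant, of isoperimetric type. At each time
the rotating path is distributed as `nu L 1`, so the expected time it spends in the strip is
`π / 2` times the measure of the strip; `strip_time` bounds this time from below. -/
lemma strip_lower {k : ℕ} (L : (Fin k → ℝ) →L[ℝ] (Fin k → ℝ)) (z : Fin k → ℝ) {s R : ℝ}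
    (hs : 0 < s) (hR : 0 < R) :
    s / (2 * R) * ((nu L 1).real (Set.Iic z ∩ Set.Icc (fun _ => -R) (fun _ => R))
        * (nu L 1).real (Set.Icc (fun _ => -R) (fun _ => R) \ Set.Iic (fun i => z i + s)))
      ≤ Real.pi / 2 * (nu L 1).real (Set.Iic (fun i => z i + s) \ Set.Iic z) := by
  set ν := nu L 1
  set box : Set (Fin k → ℝ) := Set.Icc (fun _ => -R) (fun _ => R)
  have mbox : MeasurableSet box := measurableSet_Icc
  set U := Set.Iic z ∩ box
  set W := box \ Set.Iic (fun i => z i + s)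
  set St := Set.Iic (fun i => z i + s) \ Set.Iic z
  have mU : MeasurableSet U := measurableSet_Iic.inter mbox
  have mW : MeasurableSet W := mbox.diff measurableSet_Iic
  have mSt : MeasurableSet St := measurableSet_Iic.diff measurableSet_Iic
  set τ : Measure ℝ := volume.restrict (Set.Icc 0 (Real.pi / 2))
  let E : Set (((Fin k → ℝ) × (Fin k → ℝ)) × ℝ) :=
    {q | Real.cos q.2 • q.1.1 + Real.sin q.2 • q.1.2 ∈ St}
  have mE : MeasurableSet E := by
    have : Measurable fun q : ((Fin k → ℝ) × (Fin k → ℝ)) × ℝ =>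
      Real.cos q.2 • q.1.1 + Real.sin q.2 • q.1.2 := by fun_prop
    exact this mSt
  have h1 : ((ν.prod ν).prod τ) E = ENNReal.ofReal (Real.pi / 2) * ν St := by
    rw [Measure.prod_apply_symm mE]
    have : ∀ θ, (ν.prod ν) ((fun p => (p, θ)) ⁻¹' E) = ν St := by
      intro θ
      have hh := nu_rotate L θ
      have : (Measure.map (fun p : (Fin k → ℝ) × (Fin k → ℝ) =>
        Real.cos θ • p.1 + Real.sin θ • p.2) (ν.prod ν)) St = ν St := by rw [hh]
      rw [Measure.map_apply (by fun_prop) mSt] at this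
      exact this
    simp_rw [this]
    rw [lintegral_const, mul_comm]
    simp [τ]
  have h2 : ENNReal.ofReal (s / (2 * R)) * (ν.prod ν) (U ×ˢ W) ≤ ((ν.prod ν).prod τ) E := by
    rw [Measure.prod_apply mE, ← lintegral_indicator_const (mU.prod mW)]
    refine lintegral_mono fun p => ?_
    by_cases hp : p ∈ U ×ˢ W
    · rw [Set.indicator_of_mem hp]
      exact strip_time hs hR hp.1.1 hp.2.2 (fun i => abs_le.2 ⟨hp.1.2.1 i, hp.1.2.2 i⟩)
        (fun i => abs_le.2 ⟨hp.2.1.1 i, hp.2.1.2 i⟩)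
    · rw [Set.indicator_of_notMem hp]; exact zero_le
  rw [h1, Measure.prod_prod] at h2
  have h3 := ENNReal.toReal_mono (by finiteness) h2
  rw [ENNReal.toReal_mul, ENNReal.toReal_mul, ENNReal.toReal_mul, ENNReal.toReal_ofReal (by positivity),
    ENNReal.toReal_ofReal (by positivity)] at h3
  exact h3

/-- The Gaussian measure of an orthant of measure at least `α` grows at least linearly, uniformly
in the orthant, until it exceeds `α` by a fixed amount. -/
theorem growth {k : ℕ} (L : (Fin k → ℝ) →L[ℝ] (Fin k → ℝ)) {α : ℝ} (h0 : 0 < α) (h1 : α < 1) :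
    ∃ c s₀ : ℝ, 0 < c ∧ 0 < s₀ ∧ ∀ z : Fin k → ℝ, α ≤ (nu L 1).real (Set.Iic z) →
      ∀ s, 0 < s → s ≤ s₀ → α + c * s ≤ (nu L 1).real (Set.Iic fun i => z i + s) := by
  set ν := nu L 1 with hν
  -- the box is large enough to keep mass `α / 2` of the orthant, and mass `(1 - α) / 4` of the
  -- complement of the enlarged orthant as long as the latter has measure below `(1 + α) / 2`
  set δ := min (α / 2) ((1 - α) / 4) with hδ
  have hδ0 : 0 < δ := lt_min (by linarith) (by linarith)
  obtain ⟨R', hR'0, hR'⟩ := exists_box ν (show 1 - δ < 1 by linarith)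
  set R := R' + 1
  have hR : 0 < R := by positivity
  set box : Set (Fin k → ℝ) := Set.Icc (fun _ => -R) (fun _ => R) with hbox
  have mbox : MeasurableSet box := measurableSet_Icc
  have hb : 1 - δ ≤ ν.real box := hR'.trans (measureReal_mono (Set.Icc_subset_Icc
    (fun _ => by simp only [R]; linarith) (fun _ => by simp only [R]; linarith)))
  set c := α * (1 - α) / (8 * Real.pi * R) with hc
  have hc0 : 0 < c := by have := Real.pi_pos; have : 0 < 1 - α := by linarith
                         positivity
  refine ⟨c, (1 - α) / (2 * c), hc0, div_pos (by linarith) (by positivity), fun z hz s hs hs' => ?_⟩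
  set Ks := Set.Iic fun i => z i + s
  -- `s₀` is such that `c * s ≤ (1 - α) / 2`, which settles the case of a large orthant
  by_cases hK : (1 + α) / 2 ≤ ν.real Ks
  · rw [le_div_iff₀ (by positivity)] at hs'
    linarith
  push Not at hK
  have hsub : Set.Iic z ⊆ Ks := Set.Iic_subset_Iic.2 fun i => by linarith
  have hlow := strip_lower L z hs hR
  have a1 : α / 2 ≤ ν.real (Set.Iic z ∩ box) := by
    have := measureReal_inter_add_sdiff (μ := ν) (s := Set.Iic z) mbox
    have h2 : ν.real (Set.Iic z \ box) ≤ ν.real boxᶜ := measureReal_mono fun x hx => hx.2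
    rw [probReal_compl_eq_one_sub mbox] at h2
    have := min_le_left (α / 2) ((1 - α) / 4)
    linarith
  have a2 : (1 - α) / 4 ≤ ν.real (box \ Ks) := by
    have := measureReal_inter_add_sdiff (μ := ν) (s := box) (t := Ks) measurableSet_Iic
    have h2 : ν.real (box ∩ Ks) ≤ ν.real Ks := measureReal_mono fun x hx => hx.2
    have := min_le_right (α / 2) ((1 - α) / 4)
    linarith
  have a3 : ν.real (Ks \ Set.Iic z) = ν.real Ks - ν.real (Set.Iic z) :=
    measureReal_sdiff hsub measurableSet_Iic
  have a4 : α / 2 * ((1 - α) / 4) ≤ ν.real (Set.Iic z ∩ box) * ν.real (box \ Ks) :=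
    mul_le_mul a1 a2 (by linarith) (by linarith)
  have a5 : s / (2 * R) * (α / 2 * ((1 - α) / 4)) ≤ Real.pi / 2 * (ν.real Ks - ν.real (Set.Iic z)) := by
    rw [← a3]
    exact (mul_le_mul_of_nonneg_left a4 (by positivity)).trans hlow
  have e : s / (2 * R) * (α / 2 * ((1 - α) / 4)) = Real.pi / 2 * (c * s) := by
    rw [hc]; have := Real.pi_pos; field_simp; ring
  rw [e] at a5
  have := le_of_mul_le_mul_left a5 (by positivity)
  linarith

/-! ### Sums of independent copies and exponential tilting -/

lemma nu_orthant_scale {k : ℕ} (A : Matrix (Fin k) (Fin k) ℝ) {n : ℕ} (hn : 0 < n)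
    (z : Fin k → ℝ) :
    (nu (matCLM A) n).real (Set.Iic fun i => Real.sqrt n * z i)
      = (nu (matCLM A) 1).real (Set.Iic z) := by
  have hs : 0 < Real.sqrt n := Real.sqrt_pos.2 (by exact_mod_cast hn)
  rw [nu_scale A n, measureReal_def, Measure.map_apply (by fun_prop) measurableSet_Iic,
    measureReal_def]
  congr 2
  ext x
  simp only [Set.mem_preimage, Set.mem_Iic, Pi.le_def]
  exact forall_congr' fun i => mul_le_mul_iff_right₀ hs

/-- Each coordinate of the `n`-fold sum gives mass `O(1/√n)` to every interval of unit length. -/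
theorem Mom.interval {k : ℕ} {μ : Measure (Fin k → ℝ)} [IsProbabilityMeasure μ]
    {A : Matrix (Fin k) (Fin k) ℝ} (h : Mom μ (A * A.transpose))
    (hV : ∀ i, 0 < (A * A.transpose) i i) :
    ∃ C : ℝ, 0 ≤ C ∧ ∀ (n : ℕ), 1 ≤ n → ∀ (j : Fin k) (a : ℝ),
      (mupow μ n).real {x | a < x j ∧ x j ≤ a + 1} ≤ C * (Real.sqrt n)⁻¹ := by
  obtain ⟨B, hB, hBE⟩ := h.berry_esseen hV
  refine ⟨2 * B + ∑ i, (Real.sqrt ((A * A.transpose) i i))⁻¹, by positivity, fun n hn j a => ?_⟩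
  have hn' : (0 : ℝ) < n := by exact_mod_cast hn
  set ρ := mupow μ n
  set ν := nu (matCLM A) n
  -- a slab is not a difference of orthants; it becomes one after truncation to a large box
  refine le_of_forall_pos_le_add fun ε hε => ?_
  obtain ⟨s, hs, hbox⟩ := exists_box ρ (show 1 - ε < 1 by linarith)
  set box : Set (Fin k → ℝ) := Set.Icc (fun _ => -s) (fun _ => s)
  let lo : Fin k → ℝ := Function.update (fun _ => s) j a
  let hi : Fin k → ℝ := Function.update (fun _ => s) j (a + 1)
  have hle : Set.Iic lo ⊆ Set.Iic hi := by
    refine Set.Iic_subset_Iic.2 fun i => ?_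
    by_cases hi' : i = j
    · subst hi'; simp [lo, hi]
    · simp [lo, hi, hi']
  have hsub : {x : Fin k → ℝ | a < x j ∧ x j ≤ a + 1} ⊆ (Set.Iic hi \ Set.Iic lo) ∪ boxᶜ := by
    rintro x ⟨h1, h2⟩
    by_cases hx : x ∈ box
    · refine Or.inl ⟨fun i => ?_, fun hlo => ?_⟩
      · by_cases hi' : i = j
        · subst hi'; simpa [hi] using h2
        · simpa [hi, hi'] using hx.2 i
      · have := hlo j
        simp only [lo, Function.update_self] at this
        linarith
    · exact Or.inr hx
  have e1 : ρ.real {x : Fin k → ℝ | a < x j ∧ x j ≤ a + 1}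
      ≤ ρ.real (Set.Iic hi \ Set.Iic lo) + ρ.real boxᶜ :=
    (measureReal_mono hsub).trans (measureReal_union_le _ _)
  have e2 : ρ.real boxᶜ ≤ ε := by
    rw [probReal_compl_eq_one_sub measurableSet_Icc]; linarith
  have e3 : ρ.real (Set.Iic hi \ Set.Iic lo) = ρ.real (Set.Iic hi) - ρ.real (Set.Iic lo) :=
    measureReal_sdiff hle measurableSet_Iic
  have e4 : ν.real (Set.Iic hi \ Set.Iic lo) = ν.real (Set.Iic hi) - ν.real (Set.Iic lo) :=
    measureReal_sdiff hle measurableSet_Iic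
  have e5 : ν.real (Set.Iic hi \ Set.Iic lo)
      ≤ (∑ i, (Real.sqrt ((A * A.transpose) i i))⁻¹) * (Real.sqrt n)⁻¹ := by
    have hsub2 : Set.Iic hi \ Set.Iic lo ⊆ Set.Iic (fun i => lo i + 1) \ Set.Iic lo := by
      refine Set.sdiff_subset_sdiff_left (Set.Iic_subset_Iic.2 fun i => ?_)
      by_cases hi' : i = j
      · subst hi'; simp [lo, hi]
      · simp [lo, hi, hi']
    have h1 := nu_strip A hV n hn 1 zero_le_one lo
    have h2 : ν.real (Set.Iic (fun i => lo i + 1) \ Set.Iic lo)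
        = ν.real (Set.Iic (fun i => lo i + 1)) - ν.real (Set.Iic lo) :=
      measureReal_sdiff (Set.Iic_subset_Iic.2 fun i => by simp) measurableSet_Iic
    have h3 := measureReal_mono (μ := ν) hsub2
    rw [mul_one] at h1
    linarith
  have e6 := abs_le.1 (hBE n hi)
  have e7 := abs_le.1 (hBE n lo)
  have e8 : B * (Real.sqrt (n + 1))⁻¹ ≤ B * (Real.sqrt n)⁻¹ := by
    gcongr
    linarith
  linarith [e6.2, e7.1]

/-- The sum of `n` independent copies of `X` has law `mupow (p.map X) n`. -/
lemma pi_map_sum {k : ℕ} {𝒳 : Type*} [MeasurableSpace 𝒳] (p : Measure 𝒳) [IsProbabilityMeasure p]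
    {X : 𝒳 → Fin k → ℝ} (hX : Measurable X) (n : ℕ) :
    (Measure.pi fun _ : Fin n => p).map (fun x => ∑ i, X (x i)) = mupow (p.map X) n := by
  induction n with
  | zero =>
    simp only [Finset.univ_eq_empty, Finset.sum_empty, Measure.map_const, measure_univ, one_smul]
    rfl
  | succ n ih =>
    have hp := measurePreserving_piFinSuccAbove (fun _ : Fin (n + 1) => p) 0
    have hm : Measurable fun x : Fin n → 𝒳 => ∑ i, X (x i) := by fun_prop
    have : IsProbabilityMeasure (p.map X) := Measure.isProbabilityMeasure_map hX.aemeasurable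
    show _ = mupow (p.map X) n ∗ p.map X
    rw [← ih, Measure.conv_comm, Measure.conv, Measure.map_prod_map _ _ hX hm,
      Measure.map_map (by fun_prop) (by fun_prop), ← hp.map_eq, Measure.map_map (by fun_prop)
      hp.measurable]
    congr 1
    ext x j
    simp [Fin.sum_univ_succ, MeasurableEquiv.piFinSuccAbove_apply, Fin.insertNthEquiv]
    rfl

/-- If every unit interval has small mass, then so does the exponentially tilted half-line below
`b`: the slice `b - l - 1 < Y ≤ b - l` contributes at most `exp (b - l) * δ`, and the sum over `l`
is geometric. -/
lemma lintegral_exp_le {Ω : Type*} [MeasurableSpace Ω] (m : Measure Ω) [IsProbabilityMeasure m]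
    {Y : Ω → ℝ} (hY : Measurable Y) {δ : ℝ}
    (hδ : ∀ a, m.real {x | a < Y x ∧ Y x ≤ a + 1} ≤ δ) (b : ℝ) {T : Set Ω}
    (hTb : ∀ x ∈ T, Y x ≤ b) :
    ∫⁻ x, ENNReal.ofReal (T.indicator (fun x => Real.exp (Y x)) x) ∂m
      ≤ ENNReal.ofReal (Real.exp b * (2 * δ)) := by
  have hδ0 : 0 ≤ δ := measureReal_nonneg.trans (hδ 0)
  let I : ℕ → Set Ω := fun l => {x | b - l - 1 < Y x ∧ Y x ≤ b - l - 1 + 1}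
  have mI : ∀ l, MeasurableSet (I l) := fun l =>
    (measurableSet_lt measurable_const hY).inter (measurableSet_le hY measurable_const)
  have hpt : ∀ x, ENNReal.ofReal (T.indicator (fun x => Real.exp (Y x)) x)
      ≤ ∑' l : ℕ, (I l).indicator (fun _ => ENNReal.ofReal (Real.exp (b - l))) x := by
    intro x
    by_cases hx : x ∈ T
    · have hb := hTb x hx
      have hl0 : 0 ≤ b - Y x := by linarith
      have h1 := Nat.floor_le hl0
      have h2 := Nat.lt_floor_add_one (b - Y x)
      refine le_trans ?_ (ENNReal.le_tsum ⌊b - Y x⌋₊)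
      have hxI : x ∈ I ⌊b - Y x⌋₊ := ⟨by linarith, by linarith⟩
      rw [Set.indicator_of_mem hx, Set.indicator_of_mem hxI]
      exact ENNReal.ofReal_le_ofReal (Real.exp_le_exp.2 (by linarith))
    · simp [Set.indicator_of_notMem hx]
  have he : Real.exp (-1) ≤ 1 / 2 := by
    rw [Real.exp_neg, inv_le_comm₀ (Real.exp_pos _) (by norm_num)]
    have := Real.add_one_le_exp (1 : ℝ)
    norm_num at this ⊢; linarith
  have hgeo : Summable fun l : ℕ => Real.exp (-1) ^ l :=
    summable_geometric_of_lt_one (Real.exp_pos _).le (by linarith)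
  have hsum : ∑' l : ℕ, Real.exp (-1) ^ l ≤ 2 := by
    rw [tsum_geometric_of_lt_one (Real.exp_pos _).le (by linarith)]
    rw [inv_le_comm₀ (by linarith) (by norm_num)]; linarith
  calc ∫⁻ x, ENNReal.ofReal (T.indicator (fun x => Real.exp (Y x)) x) ∂m
      ≤ ∫⁻ x, ∑' l : ℕ, (I l).indicator (fun _ => ENNReal.ofReal (Real.exp (b - l))) x ∂m :=
        lintegral_mono hpt
    _ = ∑' l : ℕ, ENNReal.ofReal (Real.exp (b - l)) * m (I l) := by
        rw [lintegral_tsum fun l => (measurable_const.indicator (mI l)).aemeasurable]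
        simp_rw [lintegral_indicator_const (mI _)]
    _ ≤ ∑' l : ℕ, ENNReal.ofReal (Real.exp b * δ * Real.exp (-1) ^ l) := by
        refine ENNReal.tsum_le_tsum fun l => ?_
        have h1 : m (I l) ≤ ENNReal.ofReal δ := by
          rw [← ofReal_measureReal]; exact ENNReal.ofReal_le_ofReal (hδ _)
        refine (mul_le_mul_right h1 _).trans (le_of_eq ?_)
        rw [← ENNReal.ofReal_mul (Real.exp_pos _).le, ← Real.exp_nat_mul, sub_eq_add_neg,
          Real.exp_add]
        congr 1
        rw [mul_neg_one]; ring
    _ = ENNReal.ofReal (Real.exp b * δ * ∑' l : ℕ, Real.exp (-1) ^ l) := by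
        rw [← tsum_mul_left, ENNReal.ofReal_tsum_of_nonneg (fun l => by positivity)
          (hgeo.mul_left _)]
    _ ≤ ENNReal.ofReal (Real.exp b * (2 * δ)) := by
        refine ENNReal.ofReal_le_ofReal ?_
        have : 0 ≤ Real.exp b * δ := by positivity
        nlinarith

/-! ### The threshold test and discrete distributions -/

/-- The threshold test for sums of independent copies of a centred vector `X`: the orthant with
corner `√n z + C` has probability at least `α`, and each exponentially tilted measure
`exp (∑ X_j)` gives it mass `O(exp (√n z_j) / √n)`. The tilted mass is bounded for every subset
`T` of the orthant, since the test must also exclude some null points. -/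
theorem orthant_test {k : ℕ} {𝒳 : Type*} [MeasurableSpace 𝒳] (p : Measure 𝒳)
    [IsProbabilityMeasure p] {X : 𝒳 → Fin k → ℝ} (hX : Measurable X)
    {A : Matrix (Fin k) (Fin k) ℝ} (h : Mom (p.map X) (A * A.transpose))
    (hV : ∀ i, 0 < (A * A.transpose) i i) {α : ℝ} (h0 : 0 < α) (h1 : α < 1) :
    ∃ C K : ℝ, 0 ≤ K ∧ ∃ n₀ : ℕ, 1 ≤ n₀ ∧ ∀ n : ℕ, n₀ ≤ n → ∀ z : Fin k → ℝ,
      α ≤ (nu (matCLM A) 1).real (Set.Iic z) →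
      α ≤ (Measure.pi fun _ : Fin n => p).real
          {x | ∀ j, ∑ i, X (x i) j ≤ Real.sqrt n * z j + C} ∧
      ∀ j, ∀ T ⊆ {x : Fin n → 𝒳 | ∀ j, ∑ i, X (x i) j ≤ Real.sqrt n * z j + C},
        ∫⁻ x, ENNReal.ofReal (T.indicator (fun x => Real.exp (∑ i, X (x i) j)) x)
            ∂(Measure.pi fun _ : Fin n => p)
          ≤ ENNReal.ofReal (Real.exp (Real.sqrt n * z j + C) * (2 * (K * (Real.sqrt n)⁻¹))) := by
  have : IsProbabilityMeasure (p.map X) := Measure.isProbabilityMeasure_map hX.aemeasurable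
  obtain ⟨B, hB, hBE⟩ := h.berry_esseen hV
  obtain ⟨K, hK, hint⟩ := h.interval hV
  obtain ⟨c, s₀, hc, hs₀, hgrow⟩ := growth (matCLM A) h0 h1
  -- enlarging the orthant by `C` gains Gaussian measure `c * C / √n`, which must exceed the
  -- Berry–Esseen error `B / √(n + 1)`; `n₀` guarantees `C / √n ≤ s₀`
  set C := (B + 1) / c with hCdef
  have hC : 0 < C := by positivity
  refine ⟨C, K, hK, ⌈(C / s₀) ^ 2⌉₊ + 1, by omega, fun n hn z hz => ?_⟩
  have hn1 : 1 ≤ n := by omega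
  have hn0 : (0 : ℝ) < n := by exact_mod_cast hn1
  have hsn : 0 < Real.sqrt n := Real.sqrt_pos.2 hn0
  have hS : Measurable fun x : Fin n → 𝒳 => ∑ i, X (x i) := by fun_prop
  have hlaw := pi_map_sum p hX n
  constructor
  · have e1 : (Measure.pi fun _ : Fin n => p).real
        {x | ∀ j, ∑ i, X (x i) j ≤ Real.sqrt n * z j + C}
        = (mupow (p.map X) n).real (Set.Iic fun j => Real.sqrt n * z j + C) := by
      rw [← hlaw, measureReal_def, measureReal_def, Measure.map_apply hS measurableSet_Iic]
      congr 2
      ext x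
      simp [Pi.le_def]
    have e2 : (fun j => Real.sqrt n * z j + C)
        = fun j => Real.sqrt n * (z j + C / Real.sqrt n) := by
      ext j; field_simp
    have e3 := abs_le.1 (hBE n fun j => Real.sqrt n * z j + C)
    have e4 := nu_orthant_scale A (by omega : 0 < n) (fun j => z j + C / Real.sqrt n)
    have hle : C / Real.sqrt n ≤ s₀ := by
      have h2 : (C / s₀) ^ 2 ≤ n := (Nat.le_ceil _).trans (by exact_mod_cast by omega)
      have h3 : C / s₀ ≤ Real.sqrt n := Real.le_sqrt_of_sq_le h2
      rw [div_le_iff₀ hs₀] at h3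
      rw [div_le_iff₀ hsn]; linarith
    have e5 := hgrow z hz (C / Real.sqrt n) (by positivity) hle
    have e6 : c * (C / Real.sqrt n) = (B + 1) * (Real.sqrt n)⁻¹ := by
      rw [hCdef]; field_simp
    have e7 : B * (Real.sqrt (n + 1))⁻¹ ≤ B * (Real.sqrt n)⁻¹ := by
      gcongr
      linarith
    have e8 : 0 < (Real.sqrt n)⁻¹ := by positivity
    rw [e1]
    rw [← e2] at e4
    linarith [e3.1]
  · intro j T hT
    refine lintegral_exp_le _ (by fun_prop) (fun a => ?_) _ (fun x hx => hT hx j)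
    refine le_trans (le_of_eq ?_) (hint n hn1 j a)
    have hmeas : MeasurableSet {x : Fin k → ℝ | a < x j ∧ x j ≤ a + 1} :=
      (measurableSet_lt measurable_const (measurable_pi_apply j)).inter
        (measurableSet_le (measurable_pi_apply j) measurable_const)
    rw [← hlaw, measureReal_def, measureReal_def, Measure.map_apply hS hmeas]
    congr 2
    ext x
    simp

section Discrete

variable {𝒳 : Type*} [Countable 𝒳] [MeasurableSpace 𝒳] [DiscreteMeasurableSpace 𝒳]
  {p : Measure 𝒳} {P : 𝒳 → ℝ}

/-- Integration against a product of discrete measures is a sum with weights `∏ P (x i)`. -/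
lemma lintegral_pi_eq [IsProbabilityMeasure p] (hP0 : ∀ x, 0 ≤ P x)
    (hp : ∀ x, p {x} = ENNReal.ofReal (P x)) (n : ℕ)
    {f : (Fin n → 𝒳) → ℝ} :
    ∫⁻ x, ENNReal.ofReal (f x) ∂(Measure.pi fun _ : Fin n => p)
      = ∑' x, ENNReal.ofReal ((∏ i, P (x i)) * f x) := by
  rw [lintegral_countable']
  refine tsum_congr fun x => ?_
  rw [Measure.pi_singleton, ENNReal.ofReal_mul (Finset.prod_nonneg fun i _ => hP0 _),
    ENNReal.ofReal_prod_of_nonneg fun i _ => hP0 _, mul_comm]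
  simp_rw [hp]

lemma summable_pi [IsProbabilityMeasure p] (hP0 : ∀ x, 0 ≤ P x)
    (hp : ∀ x, p {x} = ENNReal.ofReal (P x)) (n : ℕ)
    {f : (Fin n → 𝒳) → ℝ} (hf : ∀ x, 0 ≤ f x)
    (hfin : ∫⁻ x, ENNReal.ofReal (f x) ∂(Measure.pi fun _ : Fin n => p) ≠ ∞) :
    Summable (fun x => (∏ i, P (x i)) * f x) ∧ ∑' x, (∏ i, P (x i)) * f x
      = (∫⁻ x, ENNReal.ofReal (f x) ∂(Measure.pi fun _ : Fin n => p)).toReal := by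
  rw [lintegral_pi_eq hP0 hp] at hfin ⊢
  have e : ∀ x : Fin n → 𝒳, (ENNReal.ofReal ((∏ i, P (x i)) * f x)).toReal
      = (∏ i, P (x i)) * f x := fun x =>
    ENNReal.toReal_ofReal (mul_nonneg (Finset.prod_nonneg fun i _ => hP0 _) (hf x))
  rw [ENNReal.tsum_toReal_eq fun _ => ENNReal.ofReal_ne_top]
  have := ENNReal.summable_toReal hfin
  simp_rw [e] at this ⊢
  exact ⟨this, trivial⟩

lemma integrable_of_summable_weight (hP0 : ∀ x, 0 ≤ P x)
    (hp : ∀ x, p {x} = ENNReal.ofReal (P x)) {f : 𝒳 → ℝ} (hf : Summable fun x => P x * |f x|) :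
    Integrable f p := by
  refine ⟨(measurable_of_countable f).aestronglyMeasurable, ?_⟩
  rw [HasFiniteIntegral, lintegral_countable']
  have e : ∀ x, ‖f x‖ₑ * p {x} = ENNReal.ofReal (P x * |f x|) := fun x => by
    rw [hp, Real.enorm_eq_ofReal_abs, mul_comm, ENNReal.ofReal_mul (hP0 x)]
  simp_rw [e]
  rw [← ENNReal.ofReal_tsum_of_nonneg (fun x => mul_nonneg (hP0 x) (abs_nonneg _)) hf]
  exact ENNReal.ofReal_lt_top

lemma integral_weight (hP0 : ∀ x, 0 ≤ P x)
    (hp : ∀ x, p {x} = ENNReal.ofReal (P x)) {f : 𝒳 → ℝ} (hf : Integrable f p) :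
    ∫ x, f x ∂p = ∑' x, P x * f x := by
  rw [integral_countable hf]
  refine tsum_congr fun x => ?_
  rw [measureReal_def, hp, ENNReal.toReal_ofReal (hP0 x), smul_eq_mul]

/-- The moments of the centred log-likelihood vector, `X_j = D_j - ℓ_j`. -/
lemma mom_of_sums [IsProbabilityMeasure p] {k : ℕ} (hP0 : ∀ x, 0 ≤ P x)
    (hp : ∀ x, p {x} = ENNReal.ofReal (P x))
    {ℓ : Fin k → 𝒳 → ℝ} {D : Fin k → ℝ} (hD : ∀ j, D j = ∑' x, P x * ℓ j x)
    (hT : ∀ j, Summable fun x => P x * |ℓ j x - D j| ^ 3)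
    {V : Matrix (Fin k) (Fin k) ℝ}
    (hV : ∀ i j, V i j = ∑' x, P x * ((ℓ i x - D i) * (ℓ j x - D j))) :
    Mom (p.map fun x j => D j - ℓ j x) V := by
  set X : 𝒳 → Fin k → ℝ := fun x j => D j - ℓ j x
  have hX : AEMeasurable X p := (measurable_of_countable X).aemeasurable
  have : IsProbabilityMeasure (p.map X) := Measure.isProbabilityMeasure_map hX
  have h3 : ∀ j, Integrable (fun x => |X x j| ^ 3) p := fun j => by
    refine integrable_of_summable_weight hP0 hp ?_
    refine (hT j).congr fun x => ?_
    rw [abs_of_nonneg (by positivity : (0:ℝ) ≤ |X x j| ^ 3), abs_sub_comm]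
  have hthird : Integrable (fun y : Fin k → ℝ => ‖y‖ ^ 3) (p.map X) := by
    rw [integrable_map_measure (by fun_prop) hX]
    refine (integrable_finsetSum Finset.univ fun j _ => h3 j).mono'
      (measurable_of_countable _).aestronglyMeasurable (ae_of_all _ fun x => ?_)
    show ‖‖X x‖ ^ 3‖ ≤ ∑ j, |X x j| ^ 3
    rw [Real.norm_of_nonneg (by positivity)]
    have hnn : 0 ≤ ∑ j, |X x j| ^ 3 := Finset.sum_nonneg fun j _ => by positivity
    rcases isEmpty_or_nonempty (Fin k) with he | hne
    · have : X x = 0 := Subsingleton.elim _ _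
      rw [this]; simp
    · obtain ⟨j, hj⟩ : ∃ j, ‖X x‖ = |X x j| := by
        obtain ⟨j, -, hj⟩ := Finset.exists_mem_eq_sup' Finset.univ_nonempty fun j => ‖X x j‖
        refine ⟨j, le_antisymm ?_ (norm_le_pi_norm (X x) j)⟩
        refine (pi_norm_le_iff_of_nonneg (abs_nonneg _)).2 fun i => ?_
        have := Finset.le_sup' (fun j => ‖X x j‖) (Finset.mem_univ i)
        rw [hj] at this
        exact this
      rw [hj]
      exact Finset.single_le_sum (f := fun j => |X x j| ^ 3) (fun i _ => by positivity)
        (Finset.mem_univ j)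
  have h12 := integrable_of_cube hthird
  have hI1 : ∀ j, Integrable (fun x => X x j) p := fun j =>
    (integrable_map_measure (measurable_pi_apply j).aestronglyMeasurable hX).1 (h12 j j).1
  have hI2 : ∀ i j, Integrable (fun x => X x i * X x j) p := fun i j =>
    (integrable_map_measure (((measurable_pi_apply i).mul
      (measurable_pi_apply j)).aestronglyMeasurable) hX).1 (h12 i j).2
  refine ⟨hthird, fun j => ?_, fun i j => ?_⟩
  · rw [integral_map hX (measurable_pi_apply j).aestronglyMeasurable]
    have hℓ : Integrable (ℓ j) p := by
      have := (integrable_const (D j)).sub (hI1 j)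
      refine this.congr (ae_of_all _ fun x => ?_)
      show D j - (D j - ℓ j x) = _
      ring
    show ∫ x, (D j - ℓ j x) ∂p = 0
    rw [integral_sub (integrable_const _) hℓ, integral_weight hP0 hp hℓ, ← hD]
    simp
  · have e : ∫ y : Fin k → ℝ, y i * y j ∂(p.map X) = ∫ x, X x i * X x j ∂p :=
      integral_map hX ((measurable_pi_apply i).mul (measurable_pi_apply j)).aestronglyMeasurable
    rw [e, integral_weight hP0 hp (hI2 i j), hV]
    refine tsum_congr fun x => ?_
    show P x * ((D i - ℓ i x) * (D j - ℓ j x)) = _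
    ring

end Discrete

/-- A probability mass function on a discrete space, as a measure. -/
lemma exists_measure_of_weights {𝒳 : Type*} [MeasurableSpace 𝒳] [DiscreteMeasurableSpace 𝒳]
    {P : 𝒳 → ℝ} (hP0 : ∀ x, 0 ≤ P x) (hP1 : ∑' x, P x = 1) :
    ∃ p : Measure 𝒳, IsProbabilityMeasure p ∧ ∀ x, p {x} = ENNReal.ofReal (P x) := by
  classical
  have hs : Summable P := by
    by_contra hns
    rw [tsum_eq_zero_of_not_summable hns] at hP1
    exact zero_ne_one hP1
  refine ⟨Measure.sum fun x => ENNReal.ofReal (P x) • Measure.dirac x, ⟨?_⟩, fun x => ?_⟩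
  · rw [Measure.sum_apply _ MeasurableSet.univ]
    simp [← ENNReal.ofReal_tsum_of_nonneg hP0 hs, hP1]
  · rw [Measure.sum_apply _ (MeasurableSet.singleton x), tsum_eq_single x]
    · simp
    · intro y hy
      simp [hy]

/-- Change of measure from the product of `P` to the product of `Q`, at the points charged by the
former. -/
lemma prod_eq_tilt {𝒳 : Type*} {P Q : 𝒳 → ℝ} (hQ : ∀ x, 0 < P x → 0 < Q x) {n : ℕ}
    {x : Fin n → 𝒳} (hx : ∀ i, 0 < P (x i)) (D : ℝ) :
    ∏ i, Q (x i) = (∏ i, P (x i)) *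
      (Real.exp (-(n : ℝ) * D) * Real.exp (∑ i, (D - Real.log (P (x i) / Q (x i))))) := by
  have e : ∀ i, Q (x i) = P (x i) * (Real.exp (-D)
      * Real.exp (D - Real.log (P (x i) / Q (x i)))) := fun i => by
    have h1 := hx i
    have h2 := hQ _ h1
    rw [← Real.exp_add, show -D + (D - Real.log (P (x i) / Q (x i)))
      = -Real.log (P (x i) / Q (x i)) by ring, Real.exp_neg, Real.exp_log (by positivity)]
    field_simp
  rw [Finset.prod_congr rfl fun i _ => e i, Finset.prod_mul_distrib, Finset.prod_mul_distrib,
    Real.exp_sum, Finset.prod_const, Finset.card_univ, Fintype.card_fin, ← Real.exp_nat_mul]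
  congr 3
  ring

end

/-! ### Achievability for composite hypotheses -/

open MeasureTheory

/-- **Third-order composite hypothesis testing asymptotics, achievability.**
With `ℓ_j(x) := log(P(x)/Q_j(x))`, `D_j := E_P[ℓ_j]`, positive variances, finite third
central moments, covariance matrix `V = A·Aᵀ`, `α ∈ (0,1)` and `ε := 1−α`:
there are `c ∈ ℝ` and `n₀` such that for every `n ≥ n₀` and every `z ∈ Q_inv(V,ε)`
(i.e. `P[Z ≤ z] ≥ 1−ε`), the vector `(exp(−nD_j + √n z_j − (1/2)log n + c))_j` belongs to
`β_α(P^{⊗n}, {Q_j^{⊗n}})`, witnessed by a randomized test `t`. -/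
theorem cht_third_order_achievability {𝒳 : Type*} [Countable 𝒳] (k : ℕ)
    (P : 𝒳 → ℝ) (hP0 : ∀ x, 0 ≤ P x) (hP1 : ∑' x, P x = 1)
    (Q : Fin k → 𝒳 → ℝ) (hQ0 : ∀ j x, 0 ≤ Q j x) (hQ1 : ∀ j, ∑' x, Q j x = 1)
    (hQpos : ∀ j x, 0 < P x → 0 < Q j x)
    (D : Fin k → ℝ) (hD : ∀ j, D j = ∑' x, P x * Real.log (P x / Q j x))
    (hV : ∀ j, 0 < ∑' x, P x * (Real.log (P x / Q j x) - D j) ^ 2)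
    (hT : ∀ j, Summable fun x => P x * |Real.log (P x / Q j x) - D j| ^ 3)
    (V : Matrix (Fin k) (Fin k) ℝ)
    (hVdef : ∀ i j, V i j =
      ∑' x, P x * ((Real.log (P x / Q i x) - D i) * (Real.log (P x / Q j x) - D j)))
    (A : Matrix (Fin k) (Fin k) ℝ) (hA : A * A.transpose = V)
    (α ε : ℝ) (hα : α ∈ Set.Ioo (0 : ℝ) 1) (hε : ε = 1 - α) :
    ∃ c : ℝ, ∃ n₀ : ℕ, ∀ n : ℕ, n₀ ≤ n → ∀ z : Fin k → ℝ,
      1 - ε ≤ stdGaussianCdf A z →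
      ∃ t : (Fin n → 𝒳) → ℝ, (∀ x, t x ∈ Set.Icc (0 : ℝ) 1) ∧
        α ≤ (∑' x : Fin n → 𝒳, (∏ i, P (x i)) * t x) ∧
        ∀ j : Fin k,
          Summable (fun x : Fin n → 𝒳 => (∏ i, Q j (x i)) * t x) ∧
          (∑' x : Fin n → 𝒳, (∏ i, Q j (x i)) * t x)
            ≤ Real.exp (-(n : ℝ) * D j + Real.sqrt (n : ℝ) * z j
                - Real.log (n : ℝ) / 2 + c) := by
  let _ : MeasurableSpace 𝒳 := ⊤
  have : DiscreteMeasurableSpace 𝒳 := ⟨fun _ => trivial⟩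
  obtain ⟨p, hprob, hp⟩ := exists_measure_of_weights hP0 hP1
  have hmom : Mom (p.map fun x j => D j - Real.log (P x / Q j x)) (A * A.transpose) := by
    rw [hA]
    exact mom_of_sums (ℓ := fun j x => Real.log (P x / Q j x)) hP0 hp hD hT hVdef
  have hVpos : ∀ j, 0 < (A * A.transpose) j j := fun j => by
    rw [hA, hVdef]
    simpa only [sq] using hV j
  obtain ⟨C, K, hK, n₀, hn₀, key⟩ :=
    orthant_test p (measurable_of_countable _) hmom hVpos hα.1 hα.2
  -- `2 * K + 1` rather than `2 * K`, to have a positive argument of the logarithm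
  refine ⟨C + Real.log (2 * K + 1), n₀, fun n hn z hz => ?_⟩
  have hcdf : stdGaussianCdf A z = (nu (matCLM A) 1).real (Set.Iic z) := by
    unfold stdGaussianCdf nu gv
    rw [Nat.cast_one]
    rfl
  obtain ⟨hPn, hQn⟩ := key n hn z (by rw [← hcdf]; linarith)
  have hn' : (0 : ℝ) < n := by exact_mod_cast (by omega : 0 < n)
  set S : Set (Fin n → 𝒳) := {x | ∀ j,
    ∑ i, (D j - Real.log (P (x i) / Q j (x i))) ≤ Real.sqrt n * z j + C}
  -- sequences with a letter outside the support of `P` are excluded: there `P / Q j = 0` and the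
  -- logarithm takes its junk value, while the product of the `Q j` may charge them
  set T : Set (Fin n → 𝒳) := S ∩ {x | ∀ i, 0 < P (x i)}
  have hzero : ∀ x : Fin n → 𝒳, (¬ ∀ i, 0 < P (x i)) → ∏ i, P (x i) = 0 := by
    intro x hx
    push Not at hx
    obtain ⟨i, hi⟩ := hx
    exact Finset.prod_eq_zero (Finset.mem_univ i) (le_antisymm hi (hP0 _))
  refine ⟨T.indicator 1, fun x => ?_, ?_, fun j => ?_⟩
  · by_cases hx : x ∈ T <;> simp [hx]
  · have e1 : ∀ x : Fin n → 𝒳, (∏ i, P (x i)) * T.indicator 1 x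
        = (∏ i, P (x i)) * S.indicator 1 x := by
      intro x
      by_cases hx : ∀ i, 0 < P (x i)
      · by_cases hS : x ∈ S
        · have hT : x ∈ T := ⟨hS, hx⟩
          rw [Set.indicator_of_mem hS, Set.indicator_of_mem hT]
        · rw [Set.indicator_of_notMem hS, Set.indicator_of_notMem fun h : x ∈ T => hS h.1]
      · rw [hzero x hx, zero_mul, zero_mul]
    have e2 : ∫⁻ x, ENNReal.ofReal (S.indicator 1 x) ∂(Measure.pi fun _ : Fin n => p)
        = (Measure.pi fun _ : Fin n => p) S := by
      rw [← lintegral_indicator_one (DiscreteMeasurableSpace.forall_measurableSet S)]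
      refine lintegral_congr fun x => ?_
      by_cases hx : x ∈ S <;> simp [hx]
    have e3 := (summable_pi hP0 hp n (f := S.indicator 1)
      (fun x => Set.indicator_nonneg (fun _ _ => zero_le_one) x)
      (by rw [e2]; exact measure_ne_top _ _)).2
    rw [tsum_congr e1, e3, e2]
    exact hPn
  · let f : (Fin n → 𝒳) → ℝ := T.indicator fun x =>
      Real.exp (∑ i, (D j - Real.log (P (x i) / Q j (x i))))
    have hf : ∀ x, 0 ≤ f x := fun x => Set.indicator_nonneg (fun _ _ => (Real.exp_pos _).le) x
    have e1 : ∀ x : Fin n → 𝒳, (∏ i, Q j (x i)) * T.indicator 1 x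
        = Real.exp (-(n : ℝ) * D j) * ((∏ i, P (x i)) * f x) := by
      intro x
      by_cases hx : x ∈ T
      · simp only [f, Set.indicator_of_mem hx, Pi.one_apply, mul_one]
        rw [prod_eq_tilt (hQpos j) hx.2 (D j)]
        ring
      · simp only [f, Set.indicator_of_notMem hx, mul_zero]
    have hb := hQn j T Set.inter_subset_left
    obtain ⟨hs, ht⟩ := summable_pi hP0 hp n hf (ne_top_of_le_ne_top ENNReal.ofReal_ne_top hb)
    have hle := ENNReal.toReal_mono ENNReal.ofReal_ne_top hb
    rw [ENNReal.toReal_ofReal (by positivity)] at hle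
    simp_rw [e1]
    refine ⟨hs.mul_left _, ?_⟩
    rw [tsum_mul_left, ht]
    have e2 : Real.exp (-(n : ℝ) * D j + Real.sqrt n * z j - Real.log n / 2
        + (C + Real.log (2 * K + 1)))
        = Real.exp (-(n : ℝ) * D j) * (Real.exp (Real.sqrt n * z j + C)
          * ((2 * K + 1) * (Real.sqrt n)⁻¹)) := by
      -- the term `-log n / 2` is the factor `1 / √n` of the tilted mass
      have h1 : Real.exp (-(Real.log n / 2)) = (Real.sqrt n)⁻¹ := by
        rw [← Real.log_sqrt hn'.le, Real.exp_neg, Real.exp_log (Real.sqrt_pos.2 hn')]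
      have h2 : Real.exp (Real.log (2 * K + 1)) = 2 * K + 1 := Real.exp_log (by positivity)
      rw [← h1]
      nth_rewrite 2 [← h2]
      rw [← Real.exp_add, ← Real.exp_add, ← Real.exp_add]
      congr 1
      ring
    rw [e2]
    refine mul_le_mul_of_nonneg_left (hle.trans ?_) (Real.exp_pos _).le
    refine mul_le_mul_of_nonneg_left ?_ (Real.exp_pos _).le
    have : 0 ≤ (Real.sqrt n)⁻¹ := by positivity
    linarith
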